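/- arXiv:1710.00298 — 2 statements merged into one kernel-verified Lean document; each statement's English description precedes it below -/
import Mathlib

section
/- If G is a graph on n vertices with no isolated vertices in which every edge belongs to a triangle, then γ_g(G) ≤ (5/9)·n. -/
attribute [local instance 10] Classical.propDecidable

variable {V : Type}

private lemma card_sdiff_union_lt [Fintype V] {S T : Finset V} (h : ¬ T ⊆ S) :
    (Finset.univ \ (S ∪ T)).card < (Finset.univ \ S).card := by
  classical
  obtain ⟨u, huT, huS⟩ := Finset.not_subset.mp h
  apply Finset.card_lt_card
  rw [Finset.ssubset_def]
  constructor
  · exact Finset.sdiff_subset_sdiff (Finset.Subset.refl _) Finset.subset_union_left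
  · intro hc
    have hu : u ∈ Finset.univ \ S := by simp [huS]
    have := hc hu
    simp [huT] at this

/-- The closed neighborhood of a vertex in a simple graph, as a finset. -/
noncomputable def gClosedNbhd [Fintype V] (G : SimpleGraph V) (v : V) : Finset V :=
  Finset.univ.filter (fun u => u = v ∨ G.Adj u v)

/-- Value of the domination game on a simple graph: `S` is the set of vertices already
dominated, `dom = true` iff Dominator is the next player to move.  A legal move is a vertex
dominating at least one new vertex; Dominator minimizes, Staller maximizes the total
number of moves, and both play optimally. -/
noncomputable def gDomGameVal [Fintype V] (G : SimpleGraph V) (dom : Bool) (S : Finset V) :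
    ℕ :=
  if h : (Finset.univ.filter fun v => ¬ gClosedNbhd G v ⊆ S).Nonempty then
    1 + (if dom then
        (Finset.univ.filter fun v => ¬ gClosedNbhd G v ⊆ S).attach.inf'
          (Finset.attach_nonempty_iff.mpr h)
          (fun v => gDomGameVal G false (S ∪ gClosedNbhd G v.1))
      else
        (Finset.univ.filter fun v => ¬ gClosedNbhd G v ⊆ S).attach.sup'
          (Finset.attach_nonempty_iff.mpr h)
          (fun v => gDomGameVal G true (S ∪ gClosedNbhd G v.1)))
  else 0
termination_by (Finset.univ \ S).card
decreasing_by
  · exact card_sdiff_union_lt (Finset.mem_filter.mp v.2).2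
  · exact card_sdiff_union_lt (Finset.mem_filter.mp v.2).2

/-- The game domination number of a simple graph (Dominator starts). -/
noncomputable def gGammaGame [Fintype V] (G : SimpleGraph V) : ℕ :=
  gDomGameVal G true ∅

/-- The Staller-start game domination number of a simple graph. -/
noncomputable def gGammaGame' [Fintype V] (G : SimpleGraph V) : ℕ :=
  gDomGameVal G false ∅

/-!
The bound is obtained from a potential which is at most `15 n` at the start and never negative.
As long as the game lasts, Dominator has a move that lowers it by at least `27`, and by at least
`54 = 2 * 27` together with any reply of Staller; hence `27 γ_g(G) ≤ 15 n`.

As long as some move dominates four new vertices, a weight of `15` on every white (undominated)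
vertex and of `7` on every blue (dominated) vertex with a white neighbour suffices: such a move
lowers the total by `15 + 3 * 8 = 39` (or `7 + 4 * 8`), and every reply lowers it by `15`.

Afterwards every vertex has few white neighbours, and the potential is refined: a blue vertex with
a single white neighbour gives up its weight in exchange for a bonus on that neighbour, which is
granted only once. Triangles now enter the argument. A white edge in no white triangle has a blue
common neighbour, and this vertex has at most one further white neighbour. As soon as at most one
of its white neighbours is left, its weight is lost or exchanged for the bonus. This compensates
for the white edges that leave the newly dominated set. The good move is found in turn near a white
triangle, a white vertex with two white neighbours, an isolated white edge, and an isolated white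
vertex.
-/

namespace DominationGame

open Finset

variable [Fintype V] {G : SimpleGraph V} {S A : Finset V} {a q r u v : V}

/-! ### The potential method -/

/-- The vertices that are dominated for the first time when `v` is played in a position whose
dominated set is `S`; the move is legal when this set is nonempty. -/
noncomputable def newlyDominated (G : SimpleGraph V) (S : Finset V) (v : V) : Finset V :=
  gClosedNbhd G v \ S

/-- Dominator has a move at `S` which lowers `Φ` by at least `c`, and such that the move and any
legal reply together lower `Φ` by at least `2 * c`. -/
def HasGoodMove (G : SimpleGraph V) (Φ : Finset V → ℤ) (c : ℤ) (S : Finset V) : Prop :=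
  ∃ v, (newlyDominated G S v).Nonempty ∧ c ≤ Φ S - Φ (S ∪ newlyDominated G S v) ∧
    ∀ w, (newlyDominated G (S ∪ newlyDominated G S v) w).Nonempty →
      2 * c ≤ Φ S -
        Φ (S ∪ newlyDominated G S v ∪ newlyDominated G (S ∪ newlyDominated G S v) w)

lemma mem_newlyDominated : u ∈ newlyDominated G S v ↔ u ∉ S ∧ (u = v ∨ G.Adj v u) := by
  simp only [newlyDominated, gClosedNbhd, mem_sdiff, mem_filter, mem_univ, true_and,
    G.adj_comm v u]
  tauto

lemma mem_legal_iff :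
    v ∈ univ.filter (fun v => ¬ gClosedNbhd G v ⊆ S) ↔ (newlyDominated G S v).Nonempty := by
  simp only [newlyDominated, sdiff_nonempty, mem_filter, mem_univ, true_and]

lemma union_gClosedNbhd (G : SimpleGraph V) (S : Finset V) (v : V) :
    S ∪ gClosedNbhd G v = S ∪ newlyDominated G S v :=
  union_sdiff_self_eq_union.symm

lemma gDomGameVal_true_le (hv : (newlyDominated G S v).Nonempty) :
    gDomGameVal G true S ≤ 1 + gDomGameVal G false (S ∪ newlyDominated G S v) := by
  have hlegal := mem_legal_iff.2 hv
  rw [gDomGameVal, dif_pos ⟨v, hlegal⟩, if_pos rfl, ← union_gClosedNbhd]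
  exact Nat.add_le_add_left (inf'_le (fun w : {w // w ∈ univ.filter _} =>
    gDomGameVal G false (S ∪ gClosedNbhd G w.1)) (mem_attach _ ⟨v, hlegal⟩)) 1

lemma gDomGameVal_false_eq (G : SimpleGraph V) (S : Finset V) :
    gDomGameVal G false S = 0 ∨ ∃ v, (newlyDominated G S v).Nonempty ∧
      gDomGameVal G false S = 1 + gDomGameVal G true (S ∪ newlyDominated G S v) := by
  by_cases hlegal : (univ.filter fun v => ¬ gClosedNbhd G v ⊆ S).Nonempty
  · obtain ⟨v, -, hv⟩ := exists_mem_eq_sup' (attach_nonempty_iff.mpr hlegal)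
      (fun v => gDomGameVal G true (S ∪ gClosedNbhd G v.1))
    refine Or.inr ⟨v.1, mem_legal_iff.1 v.2, ?_⟩
    rw [gDomGameVal, dif_pos hlegal, if_neg Bool.false_ne_true, hv, union_gClosedNbhd]
  · exact Or.inl (by rw [gDomGameVal, dif_neg hlegal])

lemma gDomGameVal_true_univ (G : SimpleGraph V) : gDomGameVal G true univ = 0 := by
  rw [gDomGameVal, dif_neg]
  rintro ⟨v, hv⟩
  exact (mem_filter.1 hv).2 (subset_univ _)

lemma card_compl_union_lt (hA : ¬ A ⊆ S) (B : Finset V) : #(S ∪ A ∪ B)ᶜ < #Sᶜ := by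
  refine card_lt_card (compl_ssubset_compl.2 (ssubset_of_subset_not_subset ?_ fun h => ?_))
  · exact subset_union_left.trans subset_union_left
  · exact hA ((subset_union_right.trans subset_union_left).trans h)

theorem mul_gDomGameVal_le_of_hasGoodMove {Φ : Finset V → ℤ} {c : ℤ} (hΦ : ∀ S, 0 ≤ Φ S)
    (hgood : ∀ S, S ≠ univ → HasGoodMove G Φ c S) (S : Finset V) :
    c * gDomGameVal G true S ≤ Φ S := by
  induction hn : #Sᶜ using Nat.strong_induction_on generalizing S with
  | _ n ih =>
    rcases lt_or_ge c 0 with hc | hc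
    · exact (mul_nonpos_of_nonpos_of_nonneg hc.le (by positivity)).trans (hΦ S)
    by_cases hS : S = univ
    · simpa [hS, gDomGameVal_true_univ] using hΦ univ
    obtain ⟨v, hv, hmove, hreply⟩ := hgood S hS
    have hle := gDomGameVal_true_le hv
    rcases gDomGameVal_false_eq G (S ∪ newlyDominated G S v) with hzero | ⟨w, hw, hval⟩
    · have : (gDomGameVal G true S : ℤ) ≤ 1 := by omega
      nlinarith [hΦ (S ∪ newlyDominated G S v)]
    · have hlt := card_compl_union_lt (S := S) (A := newlyDominated G S v)
        (fun h => hv.elim fun _ ht => (mem_sdiff.1 ht).2 (h ht))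
        (newlyDominated G (S ∪ newlyDominated G S v) w)
      have hrec := ih _ (hn ▸ hlt) _ rfl
      have hdrop := hreply w hw
      set T := S ∪ newlyDominated G S v ∪ newlyDominated G (S ∪ newlyDominated G S v) w
      have : (gDomGameVal G true S : ℤ) ≤ 2 + gDomGameVal G true T := by omega
      nlinarith

/-! ### Positions and potentials -/

/-- The white neighbours of `v`, where white means undominated and blue means dominated. -/
noncomputable def whiteNbrs (G : SimpleGraph V) (S : Finset V) (v : V) : Finset V :=
  univ.filter fun u => u ∉ S ∧ G.Adj v u

/-- The number of white neighbours of a vertex. -/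
noncomputable def whiteDeg (G : SimpleGraph V) (S : Finset V) (v : V) : ℕ :=
  #(whiteNbrs G S v)

/-- A vertex is marked if it has a pendant blue neighbour, that is, a blue neighbour with a single
white neighbour. -/
def IsMarked (G : SimpleGraph V) (S : Finset V) (q : V) : Prop :=
  ∃ r ∈ S, G.Adj q r ∧ whiteDeg G S r = 1

/-- All neighbours of `q` have a single white neighbour. -/
def AllNbrsPendant (G : SimpleGraph V) (S : Finset V) (q : V) : Prop :=
  ∀ r, G.Adj q r → whiteDeg G S r = 1

/-- The white neighbours of `u` that are marked. -/
noncomputable def markedNbrs (G : SimpleGraph V) (S : Finset V) (u : V) : Finset V :=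
  (whiteNbrs G S u).filter (IsMarked G S)

/-- The additional weight carried by a marked white vertex. It stands in for the weight of its
pendant blue neighbours, which `weight` counts as `0`. The value `12` makes the domination of a
white vertex without white or non-pendant neighbours lower the potential by `27`. -/
noncomputable def bonus (G : SimpleGraph V) (S : Finset V) (q : V) : ℤ :=
  if IsMarked G S q then
    if whiteDeg G S q = 0 then if AllNbrsPendant G S q then 12 else 5
    else if whiteDeg G S q = 1 then 4 else 3
  else 0

/-- The weight of a vertex in the refined potential. -/
noncomputable def weight (G : SimpleGraph V) (S : Finset V) (v : V) : ℤ :=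
  if v ∈ S then if 2 ≤ whiteDeg G S v then 7 else 0 else 15 + bonus G S v

/-- The refined potential, used once every move dominates at most three new vertices. -/
noncomputable def potential (G : SimpleGraph V) (S : Finset V) : ℤ := ∑ v, weight G S v

/-- The decrease of the refined potential when the set `A` becomes dominated. -/
noncomputable def gain (G : SimpleGraph V) (S A : Finset V) : ℤ :=
  potential G S - potential G (S ∪ A)

/-- Every edge belongs to a triangle. -/
def EdgesInTriangles (G : SimpleGraph V) : Prop :=
  ∀ u v, G.Adj u v → ∃ w, G.Adj u w ∧ G.Adj v w

/-- Every move dominates at most three new vertices. -/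
def IsSparse (G : SimpleGraph V) (S : Finset V) : Prop :=
  ∀ v, #(newlyDominated G S v) ≤ 3

/-! ### White neighbours -/

lemma mem_whiteNbrs : u ∈ whiteNbrs G S v ↔ u ∉ S ∧ G.Adj v u := by
  simp [whiteNbrs]

lemma self_notMem_whiteNbrs : v ∉ whiteNbrs G S v := fun h => G.irrefl (mem_whiteNbrs.1 h).2

lemma whiteNbrs_union (G : SimpleGraph V) (S A : Finset V) (v : V) :
    whiteNbrs G (S ∪ A) v = whiteNbrs G S v \ A := by
  ext u
  simp only [mem_whiteNbrs, mem_union, mem_sdiff]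
  tauto

lemma whiteNbrs_union_of_forall_not_adj (h : ∀ a ∈ A, ¬ G.Adj q a) :
    whiteNbrs G (S ∪ A) q = whiteNbrs G S q := by
  rw [whiteNbrs_union, Finset.sdiff_eq_self_iff_disjoint, disjoint_right]
  exact fun a ha h' => h a ha (mem_whiteNbrs.1 h').2

lemma whiteDeg_union_of_forall_not_adj (h : ∀ a ∈ A, ¬ G.Adj q a) :
    whiteDeg G (S ∪ A) q = whiteDeg G S q := by
  rw [whiteDeg, whiteNbrs_union_of_forall_not_adj h, whiteDeg]

lemma whiteDeg_union_singleton_self : whiteDeg G (S ∪ {u}) u = whiteDeg G S u :=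
  whiteDeg_union_of_forall_not_adj fun a ha => by
    rw [mem_singleton.1 ha]
    exact G.irrefl

lemma whiteDeg_union_le (G : SimpleGraph V) (S A : Finset V) (v : V) :
    whiteDeg G (S ∪ A) v ≤ whiteDeg G S v := by
  rw [whiteDeg, whiteNbrs_union]
  exact card_le_card sdiff_subset

lemma whiteDeg_le_union_singleton (G : SimpleGraph V) (S : Finset V) (u q : V) :
    whiteDeg G S q ≤ whiteDeg G (S ∪ {u}) q + 1 := by
  rw [whiteDeg, whiteDeg, whiteNbrs_union]
  exact card_le_card_sdiff_add_card

lemma whiteDeg_pos (hu : u ∉ S) (hvu : G.Adj v u) : 1 ≤ whiteDeg G S v :=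
  card_pos.2 ⟨u, mem_whiteNbrs.2 ⟨hu, hvu⟩⟩

lemma mem_of_whiteDeg_eq_zero (h : whiteDeg G S q = 0) (hqr : G.Adj q r) : r ∈ S := by
  by_contra hr
  have := whiteDeg_pos hr hqr
  omega

lemma whiteDeg_union_eq_zero (h : ∀ u, u ∉ S → G.Adj v u → u ∈ A) :
    whiteDeg G (S ∪ A) v = 0 := by
  rw [whiteDeg, whiteNbrs_union, card_eq_zero, sdiff_eq_empty_iff_subset]
  exact fun u hu => h u (mem_whiteNbrs.1 hu).1 (mem_whiteNbrs.1 hu).2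

lemma two_le_whiteDeg (hne : u ≠ v) (hu : u ∉ S) (hv : v ∉ S) (hru : G.Adj r u)
    (hrv : G.Adj r v) : 2 ≤ whiteDeg G S r :=
  one_lt_card.2 ⟨u, mem_whiteNbrs.2 ⟨hu, hru⟩, v, mem_whiteNbrs.2 ⟨hv, hrv⟩, hne⟩

lemma whiteNbrs_eq_pair (h : whiteDeg G S r = 2) (hne : u ≠ v) (hu : u ∉ S ∧ G.Adj r u)
    (hv : v ∉ S ∧ G.Adj r v) : whiteNbrs G S r = {u, v} := by
  refine (eq_of_subset_of_card_le (fun w hw => ?_) ?_).symm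
  · rcases mem_insert.1 hw with rfl | hw
    · exact mem_whiteNbrs.2 hu
    · exact mem_whiteNbrs.2 (mem_singleton.1 hw ▸ hv)
  · rw [card_pair hne, ← h, whiteDeg]

lemma newlyDominated_of_mem (hv : v ∈ S) : newlyDominated G S v = whiteNbrs G S v := by
  ext u
  rw [mem_newlyDominated, mem_whiteNbrs]
  constructor
  · rintro ⟨hu, rfl | hvu⟩
    exacts [absurd hv hu, ⟨hu, hvu⟩]
  · exact fun ⟨hu, hvu⟩ => ⟨hu, Or.inr hvu⟩

lemma newlyDominated_of_notMem (hv : v ∉ S) :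
    newlyDominated G S v = insert v (whiteNbrs G S v) := by
  ext u
  rw [mem_newlyDominated, mem_insert, mem_whiteNbrs]
  constructor
  · rintro ⟨hu, rfl | hvu⟩
    exacts [Or.inl rfl, Or.inr ⟨hu, hvu⟩]
  · rintro (rfl | ⟨hu, hvu⟩)
    exacts [⟨hv, Or.inl rfl⟩, ⟨hu, Or.inr hvu⟩]

lemma card_newlyDominated_of_mem (hv : v ∈ S) : #(newlyDominated G S v) = whiteDeg G S v := by
  rw [newlyDominated_of_mem hv, whiteDeg]

lemma card_newlyDominated_of_notMem (hv : v ∉ S) :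
    #(newlyDominated G S v) = whiteDeg G S v + 1 := by
  rw [newlyDominated_of_notMem hv, card_insert_of_notMem self_notMem_whiteNbrs, whiteDeg]

lemma whiteDeg_union_newlyDominated (G : SimpleGraph V) (S : Finset V) (v : V) :
    whiteDeg G (S ∪ newlyDominated G S v) v = 0 :=
  whiteDeg_union_eq_zero fun _ hu hvu => mem_newlyDominated.2 ⟨hu, Or.inr hvu⟩

lemma disjoint_newlyDominated (G : SimpleGraph V) (S : Finset V) (v : V) :
    Disjoint (newlyDominated G S v) S :=
  disjoint_sdiff_self_left

lemma IsSparse.union (hS : IsSparse G S) (A : Finset V) : IsSparse G (S ∪ A) := fun v =>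
  (card_le_card (sdiff_subset_sdiff Subset.rfl subset_union_left)).trans (hS v)

lemma IsSparse.whiteDeg_le_two (hS : IsSparse G S) (hv : v ∉ S) : whiteDeg G S v ≤ 2 := by
  have := hS v
  rw [card_newlyDominated_of_notMem hv] at this
  omega

lemma IsSparse.whiteDeg_le_three (hS : IsSparse G S) (v : V) : whiteDeg G S v ≤ 3 := by
  by_cases hv : v ∈ S
  · exact card_newlyDominated_of_mem hv ▸ hS v
  · exact (hS.whiteDeg_le_two hv).trans (by norm_num)

omit [Fintype V] in
lemma EdgesInTriangles.exists_adj_ne (ht : EdgesInTriangles G) (h : G.Adj q r) :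
    ∃ w, w ≠ r ∧ G.Adj q w := by
  obtain ⟨w, hqw, hrw⟩ := ht q r h
  exact ⟨w, hrw.ne', hqw⟩

/-- Double counting of the edges between white vertices and pendant blue vertices. -/
lemma sum_card_adj_of_whiteDeg_eq_one {T : Finset V} (hT : ∀ r ∈ T, whiteDeg G S r = 1) :
    ∑ q ∈ Sᶜ, #{r ∈ T | G.Adj q r} = #T := by
  have hfiber : ∀ r ∈ T, #(bipartiteBelow G.Adj Sᶜ r) = 1 := fun r hr => by
    rw [← hT r hr, whiteDeg]
    congr 1
    ext q
    rw [mem_bipartiteBelow, mem_compl, mem_whiteNbrs, G.adj_comm]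
  rw [card_eq_sum_ones, ← sum_congr rfl hfiber]
  exact sum_card_bipartiteAbove_eq_sum_card_bipartiteBelow G.Adj

/-! ### Bonuses of marked vertices -/

lemma bonus_nonneg (G : SimpleGraph V) (S : Finset V) (q : V) : 0 ≤ bonus G S q := by
  unfold bonus; split_ifs <;> norm_num

lemma bonus_le_twelve (G : SimpleGraph V) (S : Finset V) (q : V) : bonus G S q ≤ 12 := by
  unfold bonus; split_ifs <;> norm_num

lemma bonus_le_five (h : ¬ AllNbrsPendant G S q) : bonus G S q ≤ 5 := by
  unfold bonus; split_ifs <;> norm_num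

lemma bonus_le_four (h : 1 ≤ whiteDeg G S q) : bonus G S q ≤ 4 := by
  unfold bonus; split_ifs <;> omega

lemma bonus_le_three (h : 2 ≤ whiteDeg G S q) : bonus G S q ≤ 3 := by
  unfold bonus; split_ifs <;> omega

lemma bonus_of_not_isMarked (h : ¬ IsMarked G S q) : bonus G S q = 0 := if_neg h

lemma IsMarked.three_le_bonus (h : IsMarked G S q) : 3 ≤ bonus G S q := by
  rw [bonus, if_pos h]; split_ifs <;> norm_num

lemma IsMarked.four_le_bonus (h : IsMarked G S q) (hq : whiteDeg G S q ≤ 1) :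
    4 ≤ bonus G S q := by
  rw [bonus, if_pos h]; split_ifs <;> omega

lemma IsMarked.five_le_bonus (h : IsMarked G S q) (hq : whiteDeg G S q = 0) :
    5 ≤ bonus G S q := by
  rw [bonus, if_pos h, if_pos hq]; split_ifs <;> norm_num

lemma weight_nonneg (G : SimpleGraph V) (S : Finset V) (v : V) : 0 ≤ weight G S v := by
  have := bonus_nonneg G S v
  unfold weight; split_ifs <;> omega

lemma potential_nonneg (G : SimpleGraph V) (S : Finset V) : 0 ≤ potential G S :=
  sum_nonneg fun v _ => weight_nonneg G S v

lemma IsMarked.union (h : IsMarked G S q) (hq : q ∉ S ∪ A) : IsMarked G (S ∪ A) q := by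
  obtain ⟨r, hr, hqr, hdeg⟩ := h
  have := whiteDeg_union_le G S A r
  have := whiteDeg_pos hq hqr.symm
  exact ⟨r, mem_union_left _ hr, hqr, by omega⟩

/-! ### Accounting for the gain of a set -/

/-- The blue neighbours of `q` that become pendant when `A` becomes dominated. -/
noncomputable def newPendants (G : SimpleGraph V) (S A : Finset V) (q : V) : Finset V :=
  S.filter fun r => G.Adj q r ∧ 2 ≤ whiteDeg G S r ∧ whiteDeg G (S ∪ A) r = 1

/-- The blue vertices that lose their whole weight without becoming pendant when `A` becomes
dominated. -/
noncomputable def drained (G : SimpleGraph V) (S A : Finset V) : Finset V :=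
  S.filter fun r => 2 ≤ whiteDeg G S r ∧ whiteDeg G (S ∪ A) r = 0

/-- The contribution to `gain G S A` of a vertex `q` that stays white: the change of its own bonus
and the weights of its new pendant neighbours. -/
noncomputable def netDrop (G : SimpleGraph V) (S A : Finset V) (q : V) : ℤ :=
  bonus G S q - bonus G (S ∪ A) q + 7 * #(newPendants G S A q)

lemma gain_union (G : SimpleGraph V) (S A B : Finset V) :
    gain G S (A ∪ B) = gain G S A + gain G (S ∪ A) B := by
  simp only [gain, union_assoc, sub_add_sub_cancel]

lemma sum_weight_sub_of_mem (G : SimpleGraph V) (S A : Finset V) :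
    ∑ r ∈ S, (weight G S r - weight G (S ∪ A) r) =
      7 * #(drained G S A) + 7 * ∑ q ∈ (S ∪ A)ᶜ, (#(newPendants G S A q) : ℤ) := by
  have hcount : ∑ q ∈ (S ∪ A)ᶜ, #(newPendants G S A q) =
      #{r ∈ S | 2 ≤ whiteDeg G S r ∧ whiteDeg G (S ∪ A) r = 1} := by
    rw [← sum_card_adj_of_whiteDeg_eq_one fun r hr => (mem_filter.1 hr).2.2]
    simp only [newPendants, filter_filter, and_comm, and_assoc]
  rw [← Nat.cast_sum, hcount, drained, card_filter, card_filter, Nat.cast_sum, Nat.cast_sum,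
    mul_sum, mul_sum, ← sum_add_distrib]
  refine sum_congr rfl fun r hr => ?_
  have := whiteDeg_union_le G S A r
  simp only [weight, hr, mem_union, true_or, if_true]
  split_ifs <;> omega

theorem gain_eq (hA : Disjoint A S) :
    gain G S A =
      ∑ a ∈ A, (15 + bonus G S a - if 2 ≤ whiteDeg G (S ∪ A) a then 7 else 0) +
        7 * #(drained G S A) + ∑ q ∈ (S ∪ A)ᶜ, netDrop G S A q := by
  have hnew : ∑ a ∈ A, (weight G S a - weight G (S ∪ A) a) =
      ∑ a ∈ A, (15 + bonus G S a - if 2 ≤ whiteDeg G (S ∪ A) a then 7 else 0) :=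
    sum_congr rfl fun a ha => by
      simp only [weight, mem_union, disjoint_left.1 hA ha, ha, or_true, if_true, if_false]
  have hrest : ∑ q ∈ (S ∪ A)ᶜ, (weight G S q - weight G (S ∪ A) q) =
      ∑ q ∈ (S ∪ A)ᶜ, (bonus G S q - bonus G (S ∪ A) q) :=
    sum_congr rfl fun q hq => by
      have hq := mem_compl.1 hq
      rw [weight, weight, if_neg hq, if_neg fun h => hq (mem_union_left _ h)]
      ring
  rw [gain, potential, potential, ← sum_sub_distrib, ← sum_add_sum_compl (S ∪ A),
    sum_union hA.symm, sum_weight_sub_of_mem, hnew, hrest]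
  simp only [netDrop, sum_add_distrib, mul_sum]
  ring

lemma le_netDrop_of_bonus_le {k : ℤ} (h : bonus G (S ∪ A) q ≤ k) :
    bonus G S q - k + 7 * #(newPendants G S A q) ≤ netDrop G S A q := by
  unfold netDrop
  linarith

lemma mem_newPendants_of_whiteDeg (hr : r ∈ S) (hqr : G.Adj q r) (h2 : 2 ≤ whiteDeg G S r)
    (h1 : whiteDeg G (S ∪ A) r = 1) : r ∈ newPendants G S A q :=
  mem_filter.2 ⟨hr, hqr, h2, h1⟩

lemma one_le_card_newPendants (hr : r ∈ S) (hqr : G.Adj q r) (h2 : 2 ≤ whiteDeg G S r)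
    (h1 : whiteDeg G (S ∪ A) r = 1) : 1 ≤ #(newPendants G S A q) :=
  card_pos.2 ⟨r, mem_newPendants_of_whiteDeg hr hqr h2 h1⟩

lemma exists_pendant_of_isMarked_union (hnew : IsMarked G (S ∪ A) q) (hold : ¬ IsMarked G S q) :
    1 ≤ #(newPendants G S A q) ∨ ∃ a ∈ A, G.Adj q a ∧ whiteDeg G (S ∪ A) a = 1 := by
  obtain ⟨r, hr, hqr, hdeg⟩ := hnew
  rcases mem_union.1 hr with hrS | hrA
  · have := whiteDeg_union_le G S A r
    have : whiteDeg G S r ≠ 1 := fun h => hold ⟨r, hrS, hqr, h⟩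
    exact Or.inl (one_le_card_newPendants hrS hqr (by omega) hdeg)
  · exact Or.inr ⟨r, hrA, hqr, hdeg⟩

lemma one_le_card_newPendants_of_not_adj (hA : ∀ a ∈ A, ¬ G.Adj q a)
    (hnew : IsMarked G (S ∪ A) q) (hold : ¬ IsMarked G S q) : 1 ≤ #(newPendants G S A q) :=
  (exists_pendant_of_isMarked_union hnew hold).resolve_right fun ⟨a, ha, hqa, _⟩ => hA a ha hqa

/-- The bonus `12` is only reached when the neighbour `r` becomes pendant. -/
lemma bonus_sub_five_le_netDrop (hr : r ∈ S) (hqr : G.Adj q r) (h2 : 2 ≤ whiteDeg G S r) :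
    bonus G S q - 5 ≤ netDrop G S A q := by
  by_cases h : AllNbrsPendant G (S ∪ A) q
  · have := one_le_card_newPendants (A := A) hr hqr h2 (h r hqr)
    have := le_netDrop_of_bonus_le (bonus_le_twelve G (S ∪ A) q)
    omega
  · have := le_netDrop_of_bonus_le (bonus_le_five h)
    omega

lemma bonus_union_eq_of_newPendants_eq_empty (hq : q ∉ S ∪ A) (hA : ∀ a ∈ A, ¬ G.Adj q a)
    (hP : newPendants G S A q = ∅) : bonus G (S ∪ A) q = bonus G S q := by
  have hmarked : IsMarked G (S ∪ A) q ↔ IsMarked G S q := by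
    refine ⟨fun hnew => by_contra fun hold => ?_, fun h => h.union hq⟩
    have := one_le_card_newPendants_of_not_adj hA hnew hold
    simp [hP] at this
  have hall : whiteDeg G S q = 0 → (AllNbrsPendant G (S ∪ A) q ↔ AllNbrsPendant G S q) := by
    refine fun hdeg => forall₂_congr fun r hqr => ?_
    have hle := whiteDeg_union_le G S A r
    have hpos := whiteDeg_pos hq hqr.symm
    refine ⟨fun h1 => by_contra fun hne => ?_, fun h1 => by omega⟩
    have := one_le_card_newPendants (mem_of_whiteDeg_eq_zero hdeg hqr) hqr (by omega) h1
    simp [hP] at this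
  rw [bonus, bonus, whiteDeg_union_of_forall_not_adj hA]
  split_ifs <;> first | rfl | tauto

lemma two_le_card_newPendants (ht : EdgesInTriangles G) (hq : q ∉ S)
    (hdeg : whiteDeg G S q = 0) (hold : ¬ IsMarked G S q) (hall : AllNbrsPendant G (S ∪ A) q)
    (hP : 1 ≤ #(newPendants G S A q)) : 2 ≤ #(newPendants G S A q) := by
  have hmem : ∀ r, G.Adj q r → r ∈ newPendants G S A q := fun r hqr => by
    have hrS := mem_of_whiteDeg_eq_zero hdeg hqr
    have := whiteDeg_pos hq hqr.symm
    have : whiteDeg G S r ≠ 1 := fun h => hold ⟨r, hrS, hqr, h⟩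
    exact mem_newPendants_of_whiteDeg hrS hqr (by omega) (hall r hqr)
  obtain ⟨r, hr⟩ := card_pos.1 hP
  obtain ⟨w, hwr, hqw⟩ := ht.exists_adj_ne (mem_filter.1 hr).2.1
  exact one_lt_card.2 ⟨w, hmem w hqw, r, hr, hwr⟩

lemma two_le_netDrop (ht : EdgesInTriangles G) (hq : q ∉ S) (hdeg : whiteDeg G S q = 0)
    (hold : ¬ IsMarked G S q) (hP : 1 ≤ #(newPendants G S A q)) : 2 ≤ netDrop G S A q := by
  have := bonus_nonneg G S q
  by_cases hall : AllNbrsPendant G (S ∪ A) q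
  · have := two_le_card_newPendants ht hq hdeg hold hall hP
    have := le_netDrop_of_bonus_le (bonus_le_twelve G (S ∪ A) q)
    omega
  · have := le_netDrop_of_bonus_le (bonus_le_five hall)
    omega

lemma netDrop_nonneg_of_not_adj (ht : EdgesInTriangles G) (hq : q ∉ S ∪ A)
    (hA : ∀ a ∈ A, ¬ G.Adj q a) : 0 ≤ netDrop G S A q := by
  have hqS : q ∉ S := fun h => hq (mem_union_left _ h)
  rcases (newPendants G S A q).eq_empty_or_nonempty with hP | hP
  · simp [netDrop, hP, bonus_union_eq_of_newPendants_eq_empty hq hA hP]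
  have hP := card_pos.2 hP
  have := bonus_nonneg G S q
  by_cases hdeg : whiteDeg G S q = 0
  · by_cases hold : IsMarked G S q
    · have := hold.five_le_bonus hdeg
      have := le_netDrop_of_bonus_le (bonus_le_twelve G (S ∪ A) q)
      omega
    · exact (two_le_netDrop ht hqS hdeg hold hP).trans' (by norm_num)
  · have hdeg' := whiteDeg_union_of_forall_not_adj (S := S) hA
    have := le_netDrop_of_bonus_le (bonus_le_four (by omega : 1 ≤ whiteDeg G (S ∪ A) q))
    omega

lemma netDrop_nonneg_of_not_isMarked (ht : EdgesInTriangles G) (hq : q ∉ S ∪ A)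
    (hdeg : ∀ a ∈ A, G.Adj q a → 2 ≤ whiteDeg G (S ∪ A) a) (hold : ¬ IsMarked G S q) :
    0 ≤ netDrop G S A q := by
  by_cases hA : ∀ a ∈ A, ¬ G.Adj q a
  · exact netDrop_nonneg_of_not_adj ht hq hA
  push Not at hA
  obtain ⟨a, ha, hqa⟩ := hA
  have := bonus_nonneg G S q
  by_cases hnew : IsMarked G (S ∪ A) q
  · rcases exists_pendant_of_isMarked_union hnew hold with hP | ⟨b, hb, hqb, hb1⟩
    · have hall : ¬ AllNbrsPendant G (S ∪ A) q := fun hall => by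
        have := hall a hqa
        have := hdeg a ha hqa
        omega
      have := le_netDrop_of_bonus_le (bonus_le_five hall)
      omega
    · have := hdeg b hb hqb
      omega
  · have := le_netDrop_of_bonus_le (bonus_of_not_isMarked hnew).le
    omega

lemma IsMarked.neg_one_le_netDrop (hq : IsMarked G S q) (ha : a ∉ S) (hqa : G.Adj q a)
    (h2 : 2 ≤ whiteDeg G (S ∪ A) a)
    (hdrop : whiteDeg G S q ≤ whiteDeg G (S ∪ A) q + 1) : -1 ≤ netDrop G S A q := by
  have hpos := whiteDeg_pos ha hqa
  by_cases hdeg : whiteDeg G S q = 1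
  · have hall : ¬ AllNbrsPendant G (S ∪ A) q := fun hall => by
      have := hall a hqa
      omega
    have := hq.four_le_bonus hdeg.le
    have := le_netDrop_of_bonus_le (bonus_le_five hall)
    omega
  · have := hq.three_le_bonus
    have := le_netDrop_of_bonus_le (bonus_le_four (by omega : 1 ≤ whiteDeg G (S ∪ A) q))
    omega

/-! ### Single vertices and replies -/

lemma gain_singleton_ge (ht : EdgesInTriangles G) (hu : u ∉ S) :
    15 + bonus G S u - (if 2 ≤ whiteDeg G S u then 7 else 0) +
      ∑ q ∈ whiteNbrs G S u, netDrop G S {u} q ≤ gain G S {u} := by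
  have hsub : whiteNbrs G S u ⊆ (S ∪ {u})ᶜ := fun q hq => by
    have ⟨hqS, huq⟩ := mem_whiteNbrs.1 hq
    simp [hqS, huq.ne']
  have hrest := sum_le_sum_of_subset_of_nonneg (f := netDrop G S {u}) hsub fun q hq hqu =>
    netDrop_nonneg_of_not_adj ht (mem_compl.1 hq) fun a ha hqa => hqu <| mem_whiteNbrs.2
      ⟨fun h => mem_compl.1 hq (mem_union_left _ h), (mem_singleton.1 ha ▸ hqa).symm⟩
  rw [gain_eq (disjoint_singleton_left.2 hu), sum_singleton,
    whiteDeg_union_singleton_self]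
  omega

lemma gain_singleton_of_whiteDeg_eq_zero (ht : EdgesInTriangles G) (hu : u ∉ S)
    (hdeg : whiteDeg G S u = 0) : 15 + bonus G S u ≤ gain G S {u} := by
  simpa [hdeg, card_eq_zero.1 hdeg] using gain_singleton_ge ht hu

lemma exists_blue_common_nbr (ht : EdgesInTriangles G) (hq : q ∉ S) (ha : a ∉ S)
    (hqa : G.Adj q a) (hno : ∀ w, w ∉ S → G.Adj q w → ¬ G.Adj a w) :
    ∃ w ∈ S, G.Adj q w ∧ G.Adj a w ∧ 2 ≤ whiteDeg G S w := by
  obtain ⟨w, hqw, haw⟩ := ht q a hqa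
  exact ⟨w, by_contra fun hw => hno w hw hqw haw, hqw, haw,
    two_le_whiteDeg hqa.ne hq ha hqw.symm haw.symm⟩

lemma eq_of_whiteDeg_eq_one (hdeg : whiteDeg G S q = 1) (hu : u ∉ S) (hqu : G.Adj q u)
    (hv : v ∉ S) (hqv : G.Adj q v) : u = v :=
  card_le_one.1 hdeg.le u (mem_whiteNbrs.2 ⟨hu, hqu⟩) v (mem_whiteNbrs.2 ⟨hv, hqv⟩)

lemma bonus_sub_five_le_netDrop_of_whiteDeg_eq_one (ht : EdgesInTriangles G) (hq : q ∉ S)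
    (ha : a ∉ S) (hqa : G.Adj q a) (hdeg : whiteDeg G S q = 1) :
    bonus G S q - 5 ≤ netDrop G S A q := by
  obtain ⟨w, hw, hqw, -, h2⟩ := exists_blue_common_nbr ht hq ha hqa fun w hw hqw haw =>
    haw.ne (eq_of_whiteDeg_eq_one hdeg ha hqa hw hqw)
  exact bonus_sub_five_le_netDrop hw hqw h2

lemma gain_singleton_of_whiteDeg_eq_one (ht : EdgesInTriangles G) (hu : u ∉ S)
    (hdeg : whiteDeg G S u = 1) : 10 + bonus G S u ≤ gain G S {u} := by
  have hgain := gain_singleton_ge ht hu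
  obtain ⟨q, hq⟩ := card_eq_one.1 hdeg
  obtain ⟨hqS, huq⟩ := mem_whiteNbrs.1 (hq ▸ mem_singleton_self q)
  rw [hq, sum_singleton, if_neg (by omega)] at hgain
  have := bonus_nonneg G S q
  suffices -5 ≤ netDrop G S {u} q by omega
  by_cases hq1 : whiteDeg G S q = 1
  · have := bonus_sub_five_le_netDrop_of_whiteDeg_eq_one (A := {u}) ht hqS hu huq.symm hq1
    omega
  · have := whiteDeg_le_union_singleton G S u q
    have := whiteDeg_pos hu huq.symm
    have := le_netDrop_of_bonus_le (bonus_le_four (by omega : 1 ≤ whiteDeg G (S ∪ {u}) q))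
    omega

lemma gain_singleton_of_whiteDeg_eq_two (ht : EdgesInTriangles G) (hu : u ∉ S)
    (hdeg : whiteDeg G S u = 2) : 8 + bonus G S u - #(markedNbrs G S u) ≤ gain G S {u} := by
  have hgain := gain_singleton_ge ht hu
  have hdeg' : whiteDeg G (S ∪ {u}) u = 2 := whiteDeg_union_singleton_self.trans hdeg
  have hsum : -(#(markedNbrs G S u) : ℤ) ≤ ∑ q ∈ whiteNbrs G S u, netDrop G S {u} q := by
    rw [markedNbrs, card_filter, Nat.cast_sum, ← sum_neg_distrib]
    refine sum_le_sum fun q hq => ?_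
    obtain ⟨hqS, huq⟩ := mem_whiteNbrs.1 hq
    split_ifs with hm
    · exact hm.neg_one_le_netDrop hu huq.symm hdeg'.ge (whiteDeg_le_union_singleton G S u q)
    · exact netDrop_nonneg_of_not_isMarked ht (by simp [hqS, huq.ne'])
        (fun a ha _ => mem_singleton.1 ha ▸ hdeg'.ge) hm
  rw [if_pos hdeg.ge] at hgain
  omega

lemma card_markedNbrs_le (G : SimpleGraph V) (S : Finset V) (u : V) :
    #(markedNbrs G S u) ≤ whiteDeg G S u :=
  card_filter_le _ _

lemma six_add_bonus_le_gain_singleton (ht : EdgesInTriangles G) (hS : IsSparse G S)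
    (hu : u ∉ S) : 6 + bonus G S u ≤ gain G S {u} := by
  have := hS.whiteDeg_le_two hu
  have := card_markedNbrs_le G S u
  interval_cases hdeg : whiteDeg G S u
  · have := gain_singleton_of_whiteDeg_eq_zero ht hu hdeg
    omega
  · have := gain_singleton_of_whiteDeg_eq_one ht hu hdeg
    omega
  · have := gain_singleton_of_whiteDeg_eq_two ht hu hdeg
    omega

lemma IsSparse.gain_nonneg (hS : IsSparse G S) (ht : EdgesInTriangles G) (A : Finset V) :
    0 ≤ gain G S A := by
  induction A using Finset.induction_on with
  | empty => simp [gain]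
  | insert a A _ ih =>
    rw [insert_eq, union_comm, gain_union]
    by_cases ha : a ∈ S ∪ A
    · rwa [gain.eq_1 G (S ∪ A), union_eq_left.2 (singleton_subset_iff.2 ha), sub_self, add_zero]
    · have := six_add_bonus_le_gain_singleton ht (hS.union A) ha
      have := bonus_nonneg G (S ∪ A) a
      omega

lemma IsSparse.gain_singleton_le (hS : IsSparse G S) (ht : EdgesInTriangles G) (ha : a ∈ A) :
    gain G S {a} ≤ gain G S A := by
  have hA : A = {a} ∪ A := (union_eq_right.2 (singleton_subset_iff.2 ha)).symm
  have := (hS.union {a}).gain_nonneg ht A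
  rw [hA, gain_union]
  omega

lemma gain_erase_add (ha : a ∈ A) :
    gain G S (A.erase a) + gain G (S ∪ A.erase a) {a} = gain G S A := by
  rw [← gain_union, union_comm, ← insert_eq, insert_erase ha]

/-- The vertex played itself is dominated last; it has no white neighbours by then. -/
lemma fifteen_le_gain_singleton_union_whiteNbrs (ht : EdgesInTriangles G) (hv : v ∉ S) :
    15 ≤ gain G (S ∪ whiteNbrs G S v) {v} := by
  have hdeg : whiteDeg G (S ∪ whiteNbrs G S v) v = 0 :=
    whiteDeg_union_eq_zero fun u hu hvu => mem_whiteNbrs.2 ⟨hu, hvu⟩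
  have hvS : v ∉ S ∪ whiteNbrs G S v := by simp [hv, self_notMem_whiteNbrs]
  have := gain_singleton_of_whiteDeg_eq_zero ht hvS hdeg
  have := bonus_nonneg G (S ∪ whiteNbrs G S v) v
  omega

lemma gain_newlyDominated_of_notMem (hv : v ∉ S) :
    gain G S (newlyDominated G S v) =
      gain G S (whiteNbrs G S v) + gain G (S ∪ whiteNbrs G S v) {v} := by
  rw [newlyDominated_of_notMem hv, insert_eq, union_comm, gain_union]

lemma fifteen_le_gain_of_notMem (ht : EdgesInTriangles G) (hS : IsSparse G S) (hv : v ∉ S) :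
    15 ≤ gain G S (newlyDominated G S v) := by
  have := fifteen_le_gain_singleton_union_whiteNbrs ht hv
  have := hS.gain_nonneg ht (whiteNbrs G S v)
  rw [gain_newlyDominated_of_notMem hv]
  omega

lemma isMarked_union_erase (hv : v ∈ S) (ha : a ∈ whiteNbrs G S v) :
    IsMarked G (S ∪ (whiteNbrs G S v).erase a) a := by
  refine ⟨v, mem_union_left _ hv, (mem_whiteNbrs.1 ha).2.symm, ?_⟩
  rw [whiteDeg, whiteNbrs_union, sdiff_erase_self ha, card_singleton]

/-- The last white neighbour of the blue vertex `v` is marked by `v`. -/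
lemma fifteen_le_gain_of_one_lt_card (ht : EdgesInTriangles G) (hS : IsSparse G S) (hv : v ∈ S)
    (hcard : 1 < #(newlyDominated G S v)) : 15 ≤ gain G S (newlyDominated G S v) := by
  rw [newlyDominated_of_mem hv] at *
  obtain ⟨a, ha, b, hb, hab⟩ := one_lt_card.1 hcard
  have hfirst := six_add_bonus_le_gain_singleton ht hS (mem_whiteNbrs.1 hb).1
  have hmono := hS.gain_singleton_le ht (mem_erase.2 ⟨hab.symm, hb⟩)
  have hlast := six_add_bonus_le_gain_singleton ht (hS.union ((whiteNbrs G S v).erase a)) (u := a)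
    (by simp [(mem_whiteNbrs.1 ha).1])
  have := (isMarked_union_erase hv ha).three_le_bonus
  have := bonus_nonneg G S b
  rw [← gain_erase_add ha]
  omega

lemma gain_newlyDominated_cases (ht : EdgesInTriangles G) (hS : IsSparse G S)
    (hv : (newlyDominated G S v).Nonempty) :
    15 ≤ gain G S (newlyDominated G S v) ∨ ∃ u, u ∉ S ∧ IsMarked G S u ∧
      ((whiteDeg G S u = 1 ∧ 14 ≤ gain G S (newlyDominated G S v)) ∨
        (whiteDeg G S u = 2 ∧
          11 - (#(markedNbrs G S u) : ℤ) ≤ gain G S (newlyDominated G S v))) := by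
  by_cases hvS : v ∉ S
  · exact Or.inl (fifteen_le_gain_of_notMem ht hS hvS)
  push Not at hvS
  rcases (one_le_card.2 hv).lt_or_eq with hcard | hcard
  · exact Or.inl (fifteen_le_gain_of_one_lt_card ht hS hvS hcard)
  obtain ⟨u, hu⟩ := card_eq_one.1 hcard.symm
  obtain ⟨huS, hvu⟩ : u ∉ S ∧ G.Adj v u :=
    mem_whiteNbrs.1 (newlyDominated_of_mem hvS ▸ hu ▸ mem_singleton_self u)
  have hmarked : IsMarked G S u :=
    ⟨v, hvS, hvu.symm, by rw [← card_newlyDominated_of_mem hvS, ← hcard]⟩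
  have := hmarked.three_le_bonus
  have := hS.whiteDeg_le_two huS
  rw [hu]
  interval_cases hdeg : whiteDeg G S u
  · have := gain_singleton_of_whiteDeg_eq_zero ht huS hdeg
    exact Or.inl (by omega)
  · have := gain_singleton_of_whiteDeg_eq_one ht huS hdeg
    have := hmarked.four_le_bonus hdeg.le
    exact Or.inr ⟨u, huS, hmarked, Or.inl ⟨hdeg, by omega⟩⟩
  · have := gain_singleton_of_whiteDeg_eq_two ht huS hdeg
    exact Or.inr ⟨u, huS, hmarked, Or.inr ⟨hdeg, by omega⟩⟩

lemma potential_sub_eq (G : SimpleGraph V) (S A B : Finset V) :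
    potential G S - potential G (S ∪ A ∪ B) = gain G S A + gain G (S ∪ A) B := by
  simp only [gain, sub_add_sub_cancel]

lemma hasGoodMove_of_forty_le_gain (ht : EdgesInTriangles G) (hS : IsSparse G S)
    (hv : (newlyDominated G S v).Nonempty) (hgain : 40 ≤ gain G S (newlyDominated G S v))
    (hmarked : ∀ u, u ∉ S ∪ newlyDominated G S v → IsMarked G (S ∪ newlyDominated G S v) u →
      whiteDeg G (S ∪ newlyDominated G S v) u = 2 →
      43 + (#(markedNbrs G (S ∪ newlyDominated G S v) u) : ℤ) ≤
        gain G S (newlyDominated G S v)) :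
    HasGoodMove G (potential G) 27 S := by
  refine ⟨v, hv, hgain.trans' (by norm_num), fun w hw => ?_⟩
  rw [potential_sub_eq]
  rcases gain_newlyDominated_cases ht (hS.union _) hw with h | ⟨u, hu, hm, ⟨-, h⟩ | ⟨hdeg, h⟩⟩
  · omega
  · omega
  · have := hmarked u hu hm hdeg
    omega

lemma hasGoodMove_of_fortyFive_le_gain (ht : EdgesInTriangles G) (hS : IsSparse G S)
    (hv : (newlyDominated G S v).Nonempty) (hgain : 45 ≤ gain G S (newlyDominated G S v)) :
    HasGoodMove G (potential G) 27 S :=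
  hasGoodMove_of_forty_le_gain ht hS hv (by omega) fun u _ _ hdeg => by
    have := card_markedNbrs_le G (S ∪ newlyDominated G S v) u
    omega

/-! ### Charging the edges that leave a set -/

/-- The vertices of `A` adjacent to `q`. -/
noncomputable def contacts (G : SimpleGraph V) (A : Finset V) (q : V) : Finset V :=
  A.filter (G.Adj q)

/-- The contribution of `q` to `gain G S A` when every edge that joins `A` to a vertex that stays
white is charged `k`. -/
noncomputable def surplus (G : SimpleGraph V) (S A : Finset V) (k : ℤ) (q : V) : ℤ :=
  netDrop G S A q + k * #(contacts G A q)

/-- No three white vertices form a triangle. -/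
def NoWhiteTriangle (G : SimpleGraph V) (S : Finset V) : Prop :=
  ∀ x y z, x ∉ S → y ∉ S → z ∉ S → G.Adj x y → G.Adj x z → ¬ G.Adj y z

omit [Fintype V] in
lemma mem_contacts : a ∈ contacts G A q ↔ a ∈ A ∧ G.Adj q a := mem_filter

omit [Fintype V] in
lemma contacts_eq_empty_iff : contacts G A q = ∅ ↔ ∀ a ∈ A, ¬ G.Adj q a :=
  filter_eq_empty_iff

lemma whiteDeg_union_add_card_contacts (hA : Disjoint A S) (q : V) :
    whiteDeg G (S ∪ A) q + #(contacts G A q) = whiteDeg G S q := by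
  have hinter : contacts G A q = whiteNbrs G S q ∩ A := by
    ext a
    rw [mem_contacts, mem_inter, mem_whiteNbrs]
    exact ⟨fun h => ⟨⟨disjoint_left.1 hA h.1, h.2⟩, h.1⟩, fun h => ⟨h.2, h.1.2⟩⟩
  rw [hinter, whiteDeg, whiteNbrs_union, card_sdiff_add_card_inter, whiteDeg]

lemma sum_card_contacts (G : SimpleGraph V) (S A : Finset V) :
    ∑ q ∈ (S ∪ A)ᶜ, #(contacts G A q) = ∑ a ∈ A, whiteDeg G (S ∪ A) a := by
  refine (sum_card_bipartiteAbove_eq_sum_card_bipartiteBelow G.Adj).trans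
    (sum_congr rfl fun a _ => congrArg card ?_)
  ext q
  simp only [mem_bipartiteBelow, mem_compl, mem_whiteNbrs, G.adj_comm]

lemma gain_ge_of_surplus_nonneg {U : Finset V} {k : ℤ} (hA : Disjoint A S)
    (hdeg : ∀ a ∈ A, whiteDeg G (S ∪ A) a ≤ 1) (hk : ∀ q ∉ S ∪ A, 0 ≤ surplus G S A k q)
    (hU : Disjoint U (S ∪ A)) :
    15 * #A + ∑ a ∈ A, bonus G S a + 7 * #(drained G S A) + ∑ q ∈ U, surplus G S A k q -
      k * ∑ a ∈ A, whiteDeg G (S ∪ A) a ≤ gain G S A := by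
  have hnew : ∑ a ∈ A, (15 + bonus G S a - if 2 ≤ whiteDeg G (S ∪ A) a then 7 else 0) =
      15 * #A + ∑ a ∈ A, bonus G S a := by
    rw [mul_comm, ← nsmul_eq_mul, ← sum_const, ← sum_add_distrib]
    exact sum_congr rfl fun a ha => by rw [if_neg (by have := hdeg a ha; omega), sub_zero]
  have hcharge : ∑ q ∈ (S ∪ A)ᶜ, surplus G S A k q =
      ∑ q ∈ (S ∪ A)ᶜ, netDrop G S A q + k * ∑ a ∈ A, whiteDeg G (S ∪ A) a := by
    simp only [surplus, sum_add_distrib, ← mul_sum, ← sum_card_contacts, Nat.cast_sum]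
  have := sum_le_sum_of_subset_of_nonneg (subset_compl_iff_disjoint_right.2 hU) fun q hq _ =>
    hk q (mem_compl.1 hq)
  rw [gain_eq hA, hnew]
  push_cast at *
  linarith

lemma surplus_eq_netDrop {k : ℤ} (hq : contacts G A q = ∅) :
    surplus G S A k q = netDrop G S A q := by
  simp [surplus, hq]

lemma three_le_netDrop (hP : 1 ≤ #(newPendants G S A q)) (hdeg : 1 ≤ whiteDeg G (S ∪ A) q) :
    3 ≤ netDrop G S A q := by
  have := le_netDrop_of_bonus_le (bonus_le_four hdeg)
  have := bonus_nonneg G S q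
  omega

lemma four_le_netDrop (hP : 1 ≤ #(newPendants G S A q)) (hdeg : 2 ≤ whiteDeg G (S ∪ A) q) :
    4 ≤ netDrop G S A q := by
  have := le_netDrop_of_bonus_le (bonus_le_three hdeg)
  have := bonus_nonneg G S q
  omega

lemma neg_four_le_netDrop (hdeg : 1 ≤ whiteDeg G (S ∪ A) q) : -4 ≤ netDrop G S A q := by
  have := le_netDrop_of_bonus_le (bonus_le_four hdeg)
  have := bonus_nonneg G S q
  omega

lemma NoWhiteTriangle.exists_blue_common_nbr (hN : NoWhiteTriangle G S)
    (ht : EdgesInTriangles G) (hq : q ∉ S) (ha : a ∉ S) (hqa : G.Adj q a) :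
    ∃ w ∈ S, G.Adj q w ∧ G.Adj a w ∧ 2 ≤ whiteDeg G S w :=
  DominationGame.exists_blue_common_nbr ht hq ha hqa fun w hw hqw =>
    hN q a w hq ha hw hqa hqw

lemma NoWhiteTriangle.neg_five_le_netDrop (hN : NoWhiteTriangle G S) (ht : EdgesInTriangles G)
    (hA : Disjoint A S) (hq : q ∉ S) (ha : a ∈ contacts G A q) : -5 ≤ netDrop G S A q := by
  obtain ⟨haA, hqa⟩ := mem_contacts.1 ha
  obtain ⟨w, hw, hqw, -, h2⟩ := hN.exists_blue_common_nbr ht hq (disjoint_left.1 hA haA) hqa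
  have := bonus_sub_five_le_netDrop (A := A) hw hqw h2
  have := bonus_nonneg G S q
  omega

lemma surplus_nonneg_of_contacts_eq_empty {k : ℤ} (ht : EdgesInTriangles G) (hq : q ∉ S ∪ A)
    (hc : contacts G A q = ∅) : 0 ≤ surplus G S A k q :=
  surplus_eq_netDrop (k := k) hc ▸ netDrop_nonneg_of_not_adj ht hq (contacts_eq_empty_iff.1 hc)

lemma NoWhiteTriangle.surplus_five_nonneg (hN : NoWhiteTriangle G S) (ht : EdgesInTriangles G)
    (hA : Disjoint A S) (hq : q ∉ S ∪ A) : 0 ≤ surplus G S A 5 q := by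
  rcases (contacts G A q).eq_empty_or_nonempty with hc | ⟨a, ha⟩
  · exact surplus_nonneg_of_contacts_eq_empty ht hq hc
  · have := hN.neg_five_le_netDrop ht hA (fun h => hq (mem_union_left _ h)) ha
    have := card_pos.2 ⟨a, ha⟩
    rw [surplus]
    omega

lemma NoWhiteTriangle.surplus_four_nonneg (hN : NoWhiteTriangle G S) (ht : EdgesInTriangles G)
    (hA : Disjoint A S) (hq : q ∉ S ∪ A) (h2 : ∀ a ∈ A, G.Adj q a → 2 ≤ whiteDeg G S q) :
    0 ≤ surplus G S A 4 q := by
  rcases (contacts G A q).eq_empty_or_nonempty with hc | ⟨a, ha⟩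
  · exact surplus_nonneg_of_contacts_eq_empty ht hq hc
  · have := hN.neg_five_le_netDrop ht hA (fun h => hq (mem_union_left _ h)) ha
    have := card_pos.2 ⟨a, ha⟩
    have := h2 a (mem_contacts.1 ha).1 (mem_contacts.1 ha).2
    have := whiteDeg_union_add_card_contacts (G := G) hA q
    rw [surplus]
    by_cases hone : #(contacts G A q) = 1
    · have := neg_four_le_netDrop (by omega : 1 ≤ whiteDeg G (S ∪ A) q)
      omega
    · omega

/-! ### Moves that dominate three vertices -/

/-- The move `v` dominates three vertices, each of them adjacent to another one or to no white
vertex at all, and at most `m` edges join these three vertices to vertices that stay white. -/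
structure IsTripleMove (G : SimpleGraph V) (S : Finset V) (v : V) (m : ℕ) : Prop where
  card_eq : #(newlyDominated G S v) = 3
  exists_contact : ∀ a ∈ newlyDominated G S v,
    whiteDeg G S a = 0 ∨ (contacts G (newlyDominated G S v) a).Nonempty
  sum_whiteDeg_le : ∑ a ∈ newlyDominated G S v, whiteDeg G (S ∪ newlyDominated G S v) a ≤ m

/-- Some move that dominates `y` and two more vertices dominates all white neighbours of a blue
vertex that has at least two of them. -/
def HasDrainingMove (G : SimpleGraph V) (S : Finset V) (y : V) : Prop :=
  ∃ v, IsTripleMove G S v 2 ∧ y ∈ newlyDominated G S v ∧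
    (drained G S (newlyDominated G S v)).Nonempty

/-- The edge `xy` is linked to a further white vertex `s`, which is neither isolated among the white
vertices nor adjacent to `x` or `y`, by a blue vertex with white neighbours `x`, `y` and `s`. -/
structure IsLinked (G : SimpleGraph V) (S : Finset V) (x y s : V) : Prop where
  exists_blue : ∃ w ∈ S, whiteNbrs G S w = {x, y, s}
  ne_left : s ≠ x
  ne_right : s ≠ y
  not_adj_left : ¬ G.Adj s x
  not_adj_right : ¬ G.Adj s y
  one_le_whiteDeg : 1 ≤ whiteDeg G S s

lemma whiteDeg_union_lt (hA : Disjoint A S) (ha : a ∈ A) (hqa : G.Adj q a) :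
    whiteDeg G (S ∪ A) q < whiteDeg G S q := by
  have := whiteDeg_union_add_card_contacts (G := G) hA q
  have := card_pos.2 ⟨a, mem_contacts.2 ⟨ha, hqa⟩⟩
  omega

lemma whiteDeg_union_add_two_le (hA : Disjoint A S) (hu : u ∈ A) (hv : v ∈ A) (huv : u ≠ v)
    (hqu : G.Adj q u) (hqv : G.Adj q v) : whiteDeg G (S ∪ A) q + 2 ≤ whiteDeg G S q := by
  have := whiteDeg_union_add_card_contacts (G := G) hA q
  have : 1 < #(contacts G A q) :=
    one_lt_card.2 ⟨u, mem_contacts.2 ⟨hu, hqu⟩, v, mem_contacts.2 ⟨hv, hqv⟩, huv⟩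
  omega

namespace IsTripleMove

variable {m : ℕ}

lemma nonempty (h : IsTripleMove G S v m) : (newlyDominated G S v).Nonempty :=
  card_pos.1 (by rw [h.card_eq]; norm_num)

lemma whiteDeg_union_le_one (h : IsTripleMove G S v m) (hS : IsSparse G S)
    (ha : a ∈ newlyDominated G S v) : whiteDeg G (S ∪ newlyDominated G S v) a ≤ 1 := by
  have hdisj := disjoint_newlyDominated G S v
  have := hS.whiteDeg_le_two (disjoint_left.1 hdisj ha)
  rcases h.exists_contact a ha with h0 | ⟨b, hb⟩
  · have := whiteDeg_union_le G S (newlyDominated G S v) a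
    omega
  · have := whiteDeg_union_lt hdisj (mem_contacts.1 hb).1 (mem_contacts.1 hb).2
    omega

lemma whiteDeg_eq_two (h : IsTripleMove G S v m) (hS : IsSparse G S)
    (ha : a ∈ newlyDominated G S v) (hq : q ∉ S ∪ newlyDominated G S v) (haq : G.Adj a q) :
    whiteDeg G S a = 2 := by
  have hdisj := disjoint_newlyDominated G S v
  have := hS.whiteDeg_le_two (disjoint_left.1 hdisj ha)
  have := whiteDeg_pos hq haq
  have := whiteDeg_union_le G S (newlyDominated G S v) a
  rcases h.exists_contact a ha with h0 | ⟨b, hb⟩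
  · omega
  · have := whiteDeg_union_lt hdisj (mem_contacts.1 hb).1 (mem_contacts.1 hb).2
    omega

lemma gain_ge (h : IsTripleMove G S v m) (hS : IsSparse G S) {U : Finset V} {k : ℤ} (hk0 : 0 ≤ k)
    (hk : ∀ q ∉ S ∪ newlyDominated G S v, 0 ≤ surplus G S (newlyDominated G S v) k q)
    (hU : Disjoint U (S ∪ newlyDominated G S v)) :
    45 + ∑ a ∈ newlyDominated G S v, bonus G S a + 7 * #(drained G S (newlyDominated G S v)) +
      ∑ q ∈ U, surplus G S (newlyDominated G S v) k q - k * m ≤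
        gain G S (newlyDominated G S v) := by
  have hgain := gain_ge_of_surplus_nonneg (disjoint_newlyDominated G S v)
    (fun a ha => h.whiteDeg_union_le_one hS ha) hk hU
  have := mul_le_mul_of_nonneg_left (Nat.cast_le (α := ℤ).2 h.sum_whiteDeg_le) hk0
  rw [h.card_eq] at hgain
  push_cast at *
  linarith

end IsTripleMove

lemma isTripleMove_of_whiteDeg_eq_two {m : ℕ} (hy : v ∉ S) (hdeg : whiteDeg G S v = 2)
    (hm : ∑ a ∈ whiteNbrs G S v, whiteDeg G (S ∪ newlyDominated G S v) a ≤ m) :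
    IsTripleMove G S v m where
  card_eq := by rw [card_newlyDominated_of_notMem hy, hdeg]
  exists_contact a ha := by
    rw [newlyDominated_of_notMem hy] at *
    refine Or.inr ?_
    rcases mem_insert.1 ha with rfl | ha
    · obtain ⟨b, hb⟩ := card_pos.1 (hdeg ▸ two_pos : 0 < whiteDeg G S a)
      exact ⟨b, mem_contacts.2 ⟨mem_insert_of_mem hb, (mem_whiteNbrs.1 hb).2⟩⟩
    · exact ⟨v, mem_contacts.2 ⟨mem_insert_self _ _, (mem_whiteNbrs.1 ha).2.symm⟩⟩
  sum_whiteDeg_le := by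
    refine (le_of_eq ?_).trans hm
    conv_lhs => rw [newlyDominated_of_notMem hy, sum_insert self_notMem_whiteNbrs,
      ← newlyDominated_of_notMem hy, whiteDeg_union_newlyDominated, zero_add]

lemma self_mem_newlyDominated (hv : v ∉ S) : v ∈ newlyDominated G S v :=
  mem_newlyDominated.2 ⟨hv, Or.inl rfl⟩

lemma whiteNbrs_subset_newlyDominated (G : SimpleGraph V) (S : Finset V) (v : V) :
    whiteNbrs G S v ⊆ newlyDominated G S v := fun _ hu =>
  mem_newlyDominated.2 ⟨(mem_whiteNbrs.1 hu).1, Or.inr (mem_whiteNbrs.1 hu).2⟩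

lemma IsSparse.whiteDeg_union_newlyDominated_le_one (hS : IsSparse G S) (hv : v ∉ S)
    (ha : a ∈ whiteNbrs G S v) : whiteDeg G (S ∪ newlyDominated G S v) a ≤ 1 := by
  obtain ⟨haS, hva⟩ := mem_whiteNbrs.1 ha
  have := hS.whiteDeg_le_two haS
  have := whiteDeg_union_lt (disjoint_newlyDominated G S v) (self_mem_newlyDominated hv) hva.symm
  omega

lemma IsSparse.isTripleMove_two (hS : IsSparse G S) (hv : v ∉ S) (hdeg : whiteDeg G S v = 2) :
    IsTripleMove G S v 2 :=
  isTripleMove_of_whiteDeg_eq_two hv hdeg <| (sum_le_card_nsmul _ _ 1 fun _ ha =>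
    hS.whiteDeg_union_newlyDominated_le_one hv ha).trans (by rw [← whiteDeg, hdeg, smul_eq_mul])

lemma IsSparse.isTripleMove_one (hS : IsSparse G S) (hv : v ∉ S) (hdeg : whiteDeg G S v = 2)
    (ha : a ∈ whiteNbrs G S v) (ha1 : whiteDeg G S a = 1) : IsTripleMove G S v 1 := by
  refine isTripleMove_of_whiteDeg_eq_two hv hdeg ?_
  have ha0 := whiteDeg_union_lt (disjoint_newlyDominated G S v) (self_mem_newlyDominated hv)
    (mem_whiteNbrs.1 ha).2.symm
  have hrest := sum_le_card_nsmul ((whiteNbrs G S v).erase a)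
    (fun b => whiteDeg G (S ∪ newlyDominated G S v) b) 1 fun b hb =>
      hS.whiteDeg_union_newlyDominated_le_one hv (mem_of_mem_erase hb)
  rw [card_erase_of_mem ha, ← whiteDeg, hdeg, smul_eq_mul] at hrest
  rw [← add_sum_erase _ _ ha]
  omega

lemma IsSparse.isTripleMove_of_whiteNbrs_eq (hS : IsSparse G S) {w x y s : V} (hw : w ∈ S)
    (hnbrs : whiteNbrs G S w = {x, y, s}) (hxy : G.Adj x y) (hsx : s ≠ x) (hsy : s ≠ y)
    (hs : whiteDeg G S s = 0 ∨ G.Adj s x) : IsTripleMove G S w 2 := by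
  have hdisj := disjoint_newlyDominated G S w
  have hmem : ∀ {a}, a ∈ ({x, y, s} : Finset V) → whiteDeg G S a ≤ 2 := fun ha =>
    hS.whiteDeg_le_two (mem_whiteNbrs.1 (hnbrs ▸ ha)).1
  have hcontact : ∀ {a b}, b ∈ ({x, y, s} : Finset V) → G.Adj a b →
      (contacts G {x, y, s} a).Nonempty := fun hb hab => ⟨_, mem_contacts.2 ⟨hb, hab⟩⟩
  have hx2 := hmem (by simp : x ∈ _)
  have hy2 := hmem (by simp : y ∈ _)
  have hs2 := hmem (by simp : s ∈ _)
  refine ⟨?_, ?_, ?_⟩ <;> rw [newlyDominated_of_mem hw, hnbrs] at *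
  · exact card_eq_three.2 ⟨x, y, s, hxy.ne, hsx.symm, hsy.symm, rfl⟩
  · simp only [mem_insert, mem_singleton, forall_eq_or_imp, forall_eq]
    exact ⟨Or.inr (hcontact (by simp) hxy), Or.inr (hcontact (by simp) hxy.symm),
      hs.imp_right (hcontact (by simp))⟩
  · rw [sum_insert (by simp [hxy.ne, hsx.symm]), sum_pair hsy.symm]
    have := whiteDeg_union_lt hdisj (by simp) hxy
    have := whiteDeg_union_lt hdisj (by simp) hxy.symm
    rcases hs with hs0 | hsx'
    · have := whiteDeg_union_le G S {x, y, s} s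
      omega
    · have := whiteDeg_union_add_two_le hdisj (by simp) (by simp) hsy hsx'.symm hxy
      have := whiteDeg_union_lt hdisj (by simp) hsx'
      omega

lemma hasDrainingMove_or_exists_isLinked {x y : V} (ht : EdgesInTriangles G) (hS : IsSparse G S)
    (hN : NoWhiteTriangle G S) (hy : y ∉ S) (hdeg : whiteDeg G S y = 2)
    (hx : x ∈ whiteNbrs G S y) : HasDrainingMove G S y ∨ ∃ s, IsLinked G S x y s := by
  obtain ⟨hxS, hyx⟩ := mem_whiteNbrs.1 hx
  obtain ⟨w, hw, hyw, hxw, h2⟩ := hN.exists_blue_common_nbr ht hy hxS hyx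
  have hdrained : ∀ v, whiteNbrs G S w ⊆ newlyDominated G S v →
      (drained G S (newlyDominated G S v)).Nonempty := fun v h =>
    ⟨w, mem_filter.2 ⟨hw, h2, whiteDeg_union_eq_zero fun u hu hwu =>
      h (mem_whiteNbrs.2 ⟨hu, hwu⟩)⟩⟩
  by_cases hsub : whiteNbrs G S w ⊆ newlyDominated G S y
  · exact Or.inl ⟨y, hS.isTripleMove_two hy hdeg, self_mem_newlyDominated hy, hdrained y hsub⟩
  obtain ⟨s, hsw, hs⟩ := not_subset.1 hsub
  have hsx : s ≠ x := fun h => hs (h ▸ whiteNbrs_subset_newlyDominated G S y hx)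
  have hsy : s ≠ y := by
    rintro rfl
    exact hs (self_mem_newlyDominated hy)
  have hsy' : ¬ G.Adj s y := fun h =>
    hs (mem_newlyDominated.2 ⟨(mem_whiteNbrs.1 hsw).1, Or.inr h.symm⟩)
  have hnbrs : whiteNbrs G S w = {x, y, s} := by
    refine (eq_of_subset_of_card_le ?_ ?_).symm
    · simp only [insert_subset_iff, singleton_subset_iff, mem_whiteNbrs]
      exact ⟨⟨hxS, hxw.symm⟩, ⟨hy, hyw.symm⟩, mem_whiteNbrs.1 hsw⟩
    · rw [card_eq_three.2 ⟨x, y, s, hyx.ne', hsx.symm, hsy.symm, rfl⟩]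
      exact hS.whiteDeg_le_three w
  by_cases hdrain : whiteDeg G S s = 0 ∨ G.Adj s x
  · refine Or.inl ⟨w, hS.isTripleMove_of_whiteNbrs_eq hw hnbrs hyx.symm hsx hsy hdrain, ?_,
      hdrained w (whiteNbrs_subset_newlyDominated G S w)⟩
    exact mem_newlyDominated.2 ⟨hy, Or.inr hyw.symm⟩
  · rw [not_or] at hdrain
    exact Or.inr ⟨s, ⟨w, hw, hnbrs⟩, hsx, hsy, hdrain.2, hsy',
      Nat.one_le_iff_ne_zero.2 hdrain.1⟩

/-! ### White vertices with two white neighbours -/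

/-- No white vertex with two white neighbours is marked. -/
def NoMarkedDegTwo (G : SimpleGraph V) (S : Finset V) : Prop :=
  ∀ u ∉ S, whiteDeg G S u = 2 → ¬ IsMarked G S u

/-- No white vertex whose only white neighbour has two white neighbours is marked. -/
def NoMarkedLeaf (G : SimpleGraph V) (S : Finset V) : Prop :=
  ∀ u ∉ S, whiteDeg G S u = 2 → ∀ q ∈ whiteNbrs G S u, whiteDeg G S q = 1 → ¬ IsMarked G S q

/-- White neighbours of a white vertex with two white neighbours have two white neighbours
themselves. -/
def DegTwoClosed (G : SimpleGraph V) (S : Finset V) : Prop :=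
  ∀ u ∉ S, whiteDeg G S u = 2 → ∀ q ∈ whiteNbrs G S u, whiteDeg G S q = 2

/-- Every white vertex outside `A` with a neighbour in `A` has two white neighbours. -/
def HasDegTwoBoundary (G : SimpleGraph V) (S A : Finset V) : Prop :=
  ∀ q ∉ S ∪ A, ∀ a ∈ A, G.Adj q a → whiteDeg G S q = 2

lemma hasGoodMove_of_not_noWhiteTriangle (ht : EdgesInTriangles G) (hS : IsSparse G S)
    (h : ¬ NoWhiteTriangle G S) : HasGoodMove G (potential G) 27 S := by
  simp only [NoWhiteTriangle, not_forall, not_not] at h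
  obtain ⟨x, y, z, hx, hy, hz, hxy, hxz, hyz⟩ := h
  have hdisj := disjoint_newlyDominated G S x
  have hyA := whiteNbrs_subset_newlyDominated G S x (mem_whiteNbrs.2 ⟨hy, hxy⟩)
  have hzA := whiteNbrs_subset_newlyDominated G S x (mem_whiteNbrs.2 ⟨hz, hxz⟩)
  have hdeg : whiteDeg G S x = 2 :=
    (hS.whiteDeg_le_two hx).antisymm (two_le_whiteDeg hyz.ne hy hz hxy hxz)
  have htriple : IsTripleMove G S x 0 := by
    refine isTripleMove_of_whiteDeg_eq_two hx hdeg ?_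
    have := whiteDeg_union_add_two_le hdisj (self_mem_newlyDominated hx) hzA hxz.ne hxy.symm hyz
    have := whiteDeg_union_add_two_le hdisj (self_mem_newlyDominated hx) hyA hxy.ne hxz.symm
      hyz.symm
    have := hS.whiteDeg_le_two hy
    have := hS.whiteDeg_le_two hz
    rw [whiteNbrs_eq_pair hdeg hyz.ne ⟨hy, hxy⟩ ⟨hz, hxz⟩, sum_pair hyz.ne]
    omega
  have hcontacts : ∀ q ∉ S ∪ newlyDominated G S x, ∀ a ∈ newlyDominated G S x, ¬ G.Adj q a :=
    fun q hq a ha hqa => by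
      have := whiteDeg_pos hq hqa.symm
      have := sum_eq_zero_iff.1 (Nat.le_zero.1 htriple.sum_whiteDeg_le) a ha
      omega
  have hgain := htriple.gain_ge hS le_rfl (fun q hq => surplus_nonneg_of_contacts_eq_empty ht hq
    (contacts_eq_empty_iff.2 (hcontacts q hq))) (disjoint_empty_left _)
  have := sum_nonneg fun a (_ : a ∈ newlyDominated G S x) => bonus_nonneg G S a
  refine hasGoodMove_of_fortyFive_le_gain ht hS htriple.nonempty ?_
  rw [sum_empty] at hgain
  omega

namespace IsLinked

variable {x y z s t : V}

lemma symm (h : IsLinked G S x y s) : IsLinked G S y x s where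
  exists_blue := by
    obtain ⟨w, hw, hnbrs⟩ := h.exists_blue
    exact ⟨w, hw, by rw [hnbrs, insert_comm]⟩
  ne_left := h.ne_right
  ne_right := h.ne_left
  not_adj_left := h.not_adj_right
  not_adj_right := h.not_adj_left
  one_le_whiteDeg := h.one_le_whiteDeg

lemma notMem_union_newlyDominated (h : IsLinked G S x y s) : s ∉ S ∪ newlyDominated G S y := by
  obtain ⟨w, -, hnbrs⟩ := h.exists_blue
  rw [mem_union, not_or, mem_newlyDominated]
  refine ⟨(mem_whiteNbrs.1 (hnbrs ▸ (by simp : s ∈ ({x, y, s} : Finset V)))).1, ?_⟩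
  rintro ⟨-, rfl | hys⟩
  exacts [h.ne_right rfl, h.not_adj_right hys.symm]

lemma exists_mem_newPendants (h : IsLinked G S x y s) (hx : x ∈ A) (hy : y ∈ A)
    (hs : s ∉ S ∪ A) : ∃ w ∈ newPendants G S A s, whiteNbrs G S w = {x, y, s} := by
  obtain ⟨w, hw, hnbrs⟩ := h.exists_blue
  refine ⟨w, mem_newPendants_of_whiteDeg hw ?_ ?_ ?_, hnbrs⟩
  · exact (mem_whiteNbrs.1 (hnbrs ▸ (by simp : s ∈ ({x, y, s} : Finset V)))).2.symm
  · rw [whiteDeg, hnbrs]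
    exact one_lt_card.2 ⟨x, by simp, s, by simp, h.ne_left.symm⟩
  · have hsA : s ∉ A := fun hsA => hs (mem_union_right _ hsA)
    rw [whiteDeg, whiteNbrs_union, hnbrs, insert_sdiff_of_mem _ hx, insert_sdiff_of_mem _ hy,
      sdiff_eq_self_of_disjoint (disjoint_singleton_left.2 hsA), card_singleton]

lemma three_le_netDrop (h : IsLinked G S x y s) (hx : x ∈ A) (hy : y ∈ A) (hs : s ∉ S ∪ A)
    (h1 : 1 ≤ whiteDeg G (S ∪ A) s) : 3 ≤ netDrop G S A s := by
  obtain ⟨w, hw, -⟩ := h.exists_mem_newPendants hx hy hs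
  exact DominationGame.three_le_netDrop (card_pos.2 ⟨w, hw⟩) h1

lemma ten_le_netDrop (h : IsLinked G S x y s) (h' : IsLinked G S z y s) (hxz : x ≠ z)
    (hxy : x ≠ y) (hx : x ∈ A) (hy : y ∈ A) (hz : z ∈ A) (hs : s ∉ S ∪ A)
    (h1 : 1 ≤ whiteDeg G (S ∪ A) s) : 10 ≤ netDrop G S A s := by
  obtain ⟨w, hw, hnbrs⟩ := h.exists_mem_newPendants hx hy hs
  obtain ⟨w', hw', hnbrs'⟩ := h'.exists_mem_newPendants hz hy hs
  have hne : w ≠ w' := by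
    rintro rfl
    have : x ∈ ({z, y, s} : Finset V) := hnbrs' ▸ hnbrs ▸ mem_insert_self _ _
    simp only [mem_insert, mem_singleton] at this
    exact this.elim hxz fun h'' => h''.elim hxy h.ne_left.symm
  have hcard : 1 < #(newPendants G S A s) := one_lt_card.2 ⟨w, hw, w', hw', hne⟩
  have := le_netDrop_of_bonus_le (bonus_le_four h1)
  have := bonus_nonneg G S s
  omega

lemma one_le_whiteDeg_union (h : IsLinked G S x y s) (hy : y ∉ S) (hdeg : whiteDeg G S y = 2)
    (hx : x ∈ whiteNbrs G S y) (hB : HasDegTwoBoundary G S (newlyDominated G S y)) :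
    1 ≤ whiteDeg G (S ∪ newlyDominated G S y) s := by
  have hcontacts : #(contacts G (newlyDominated G S y) s) ≤ 1 := by
    have hsub : contacts G (newlyDominated G S y) s ⊆ (whiteNbrs G S y).erase x := fun a ha => by
      obtain ⟨ha, hsa⟩ := mem_contacts.1 ha
      rw [newlyDominated_of_notMem hy] at ha
      refine mem_erase.2 ⟨fun hax => h.not_adj_left (hax ▸ hsa), ?_⟩
      exact (mem_insert.1 ha).resolve_left fun hay => h.not_adj_right (hay ▸ hsa)
    have := card_le_card hsub
    rwa [card_erase_of_mem hx, ← whiteDeg, hdeg] at this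
  have hcard := whiteDeg_union_add_card_contacts (G := G) (disjoint_newlyDominated G S y) s
  have := h.one_le_whiteDeg
  rcases (contacts G (newlyDominated G S y) s).eq_empty_or_nonempty with hc | ⟨a, ha⟩
  · rw [hc, card_empty] at hcard
    omega
  · have := hB s h.notMem_union_newlyDominated a (mem_contacts.1 ha).1 (mem_contacts.1 ha).2
    omega

lemma three_add_le_surplus (h : IsLinked G S x y s) (hy : y ∉ S) (hdeg : whiteDeg G S y = 2)
    (hx : x ∈ whiteNbrs G S y) (hB : HasDegTwoBoundary G S (newlyDominated G S y)) :
    3 + 4 * #(contacts G (newlyDominated G S y) s) ≤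
      surplus G S (newlyDominated G S y) 4 s := by
  have := h.three_le_netDrop (whiteNbrs_subset_newlyDominated G S y hx)
    (self_mem_newlyDominated hy) h.notMem_union_newlyDominated
    (h.one_le_whiteDeg_union hy hdeg hx hB)
  rw [surplus]
  omega

lemma ten_le_surplus (h : IsLinked G S x y s) (h' : IsLinked G S z y s) (hxz : x ≠ z)
    (hy : y ∉ S) (hdeg : whiteDeg G S y = 2) (hx : x ∈ whiteNbrs G S y)
    (hz : z ∈ whiteNbrs G S y) (hB : HasDegTwoBoundary G S (newlyDominated G S y)) :
    10 ≤ surplus G S (newlyDominated G S y) 4 s := by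
  have := h.ten_le_netDrop h' hxz (mem_whiteNbrs.1 hx).2.ne'
    (whiteNbrs_subset_newlyDominated G S y hx) (self_mem_newlyDominated hy)
    (whiteNbrs_subset_newlyDominated G S y hz) h.notMem_union_newlyDominated
    (h.one_le_whiteDeg_union hy hdeg hx hB)
  rw [surplus]
  omega

lemma six_le_sum_surplus (h : IsLinked G S x y s) (h' : IsLinked G S z y t) (hxz : x ≠ z)
    (hy : y ∉ S) (hdeg : whiteDeg G S y = 2) (hx : x ∈ whiteNbrs G S y)
    (hz : z ∈ whiteNbrs G S y) (hB : HasDegTwoBoundary G S (newlyDominated G S y)) :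
    6 ≤ ∑ q ∈ {s, t}, surplus G S (newlyDominated G S y) 4 q := by
  by_cases hst : s = t
  · subst hst
    have := h.ten_le_surplus h' hxz hy hdeg hx hz hB
    rw [pair_eq_singleton, sum_singleton]
    omega
  · have := h.three_add_le_surplus hy hdeg hx hB
    have := h'.three_add_le_surplus hy hdeg hz hB
    rw [sum_pair hst]
    omega

end IsLinked

lemma NoWhiteTriangle.surplus_four_nonneg_of_hasDegTwoBoundary (hN : NoWhiteTriangle G S)
    (ht : EdgesInTriangles G) (hA : Disjoint A S) (hB : HasDegTwoBoundary G S A) :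
    ∀ q ∉ S ∪ A, 0 ≤ surplus G S A 4 q := fun q hq =>
  hN.surplus_four_nonneg ht hA hq fun a ha hqa => (hB q hq a ha hqa).ge

lemma hasDegTwoBoundary_newlyDominated {y : V}
    (h : ∀ x ∈ whiteNbrs G S y, ∀ q ∈ whiteNbrs G S x, whiteDeg G S q = 2) :
    HasDegTwoBoundary G S (newlyDominated G S y) := fun q hq a ha hqa => by
  obtain ⟨haS, hay⟩ := mem_newlyDominated.1 ha
  rw [mem_union, not_or] at hq
  rcases hay with rfl | hya
  · exact absurd (mem_newlyDominated.2 ⟨hq.1, Or.inr hqa.symm⟩) hq.2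
  · exact h a (mem_whiteNbrs.2 ⟨haS, hya⟩) q (mem_whiteNbrs.2 ⟨hq.1, hqa.symm⟩)

lemma bonus_le_sum_bonus (G : SimpleGraph V) (S : Finset V) (ha : a ∈ A) :
    bonus G S a ≤ ∑ b ∈ A, bonus G S b :=
  single_le_sum (fun b _ => bonus_nonneg G S b) ha

lemma IsMarked.hasGoodMove_of_hasDrainingMove {y : V} (hm : IsMarked G S y)
    (ht : EdgesInTriangles G) (hS : IsSparse G S) (hN : NoWhiteTriangle G S)
    (h : HasDrainingMove G S y) : HasGoodMove G (potential G) 27 S := by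
  obtain ⟨v, htriple, hyv, hdrained⟩ := h
  have hgain := htriple.gain_ge hS (by norm_num : (0 : ℤ) ≤ 5)
    (fun q hq => hN.surplus_five_nonneg ht (disjoint_newlyDominated G S v) hq)
    (disjoint_empty_left _)
  have := bonus_le_sum_bonus G S hyv
  have := hm.three_le_bonus
  have := card_pos.2 hdrained
  refine hasGoodMove_of_fortyFive_le_gain ht hS htriple.nonempty ?_
  rw [sum_empty] at hgain
  omega

lemma IsLinked.three_le_surplus_of_leaf {x y s p : V} {k : ℤ} (h : IsLinked G S x y s)
    (hx : x ∉ S) (hdeg : whiteDeg G S x = 2) (hy : y ∈ whiteNbrs G S x)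
    (hp : p ∈ whiteNbrs G S x) (hyp : y ≠ p) (hdegp : whiteDeg G S p = 1) :
    3 ≤ surplus G S (newlyDominated G S x) k s := by
  have hsU := h.symm.notMem_union_newlyDominated
  have hA : newlyDominated G S x = {x, y, p} := by
    rw [newlyDominated_of_notMem hx,
      whiteNbrs_eq_pair hdeg hyp (mem_whiteNbrs.1 hy) (mem_whiteNbrs.1 hp)]
  have hcontacts : contacts G (newlyDominated G S x) s = ∅ := by
    rw [contacts_eq_empty_iff, hA]
    simp only [mem_insert, mem_singleton, forall_eq_or_imp, forall_eq]
    refine ⟨h.not_adj_left, h.not_adj_right, fun hsp => h.ne_left ?_⟩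
    exact eq_of_whiteDeg_eq_one hdegp (fun hsS => hsU (mem_union_left _ hsS)) hsp.symm hx
      (mem_whiteNbrs.1 hp).2.symm
  have hcard := whiteDeg_union_add_card_contacts (G := G) (disjoint_newlyDominated G S x) s
  rw [hcontacts, card_empty] at hcard
  rw [surplus_eq_netDrop hcontacts]
  exact h.three_le_netDrop (self_mem_newlyDominated hx)
    (whiteNbrs_subset_newlyDominated G S x hy) hsU (by have := h.one_le_whiteDeg; omega)

lemma IsMarked.hasGoodMove_of_leaf {x y p : V} (hm : IsMarked G S y) (ht : EdgesInTriangles G)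
    (hS : IsSparse G S) (hN : NoWhiteTriangle G S) (hy : y ∉ S) (hdeg : whiteDeg G S y = 2)
    (hx : x ∈ whiteNbrs G S y) (hdegx : whiteDeg G S x = 2) (hp : p ∈ whiteNbrs G S x)
    (hdegp : whiteDeg G S p = 1) : HasGoodMove G (potential G) 27 S := by
  rcases hasDrainingMove_or_exists_isLinked ht hS hN hy hdeg hx with hdrain | ⟨s, hs⟩
  · exact hm.hasGoodMove_of_hasDrainingMove ht hS hN hdrain
  obtain ⟨hxS, hyx⟩ := mem_whiteNbrs.1 hx
  have hyp : y ≠ p := by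
    rintro rfl
    omega
  have hyx' : y ∈ whiteNbrs G S x := mem_whiteNbrs.2 ⟨hy, hyx.symm⟩
  have htriple := hS.isTripleMove_one hxS hdegx hp hdegp
  have hgain := htriple.gain_ge hS (by norm_num : (0 : ℤ) ≤ 5)
    (fun q hq => hN.surplus_five_nonneg ht (disjoint_newlyDominated G S x) hq)
    (disjoint_singleton_left.2 hs.symm.notMem_union_newlyDominated)
  have := hs.three_le_surplus_of_leaf (k := 5) hxS hdegx hyx' hp hyp hdegp
  have := bonus_le_sum_bonus G S (whiteNbrs_subset_newlyDominated G S x hyx')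
  have := hm.three_le_bonus
  refine hasGoodMove_of_fortyFive_le_gain ht hS htriple.nonempty ?_
  rw [sum_singleton] at hgain
  omega

lemma IsMarked.hasGoodMove_of_hasDegTwoBoundary {y : V} (hm : IsMarked G S y)
    (ht : EdgesInTriangles G) (hS : IsSparse G S) (hN : NoWhiteTriangle G S) (hy : y ∉ S)
    (hdeg : whiteDeg G S y = 2) (hB : HasDegTwoBoundary G S (newlyDominated G S y)) :
    HasGoodMove G (potential G) 27 S := by
  by_cases hdrain : HasDrainingMove G S y
  · exact hm.hasGoodMove_of_hasDrainingMove ht hS hN hdrain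
  obtain ⟨x, hx, z, hz, hxz⟩ := one_lt_card.1 (hdeg.ge : 1 < #(whiteNbrs G S y))
  obtain ⟨s, hs⟩ := (hasDrainingMove_or_exists_isLinked ht hS hN hy hdeg hx).resolve_left hdrain
  obtain ⟨t, ht'⟩ := (hasDrainingMove_or_exists_isLinked ht hS hN hy hdeg hz).resolve_left hdrain
  have hU : Disjoint {s, t} (S ∪ newlyDominated G S y) := by
    rw [disjoint_insert_left, disjoint_singleton_left]
    exact ⟨hs.notMem_union_newlyDominated, ht'.notMem_union_newlyDominated⟩
  have htriple := hS.isTripleMove_two hy hdeg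
  have hgain := htriple.gain_ge hS (by norm_num : (0 : ℤ) ≤ 4)
    (hN.surplus_four_nonneg_of_hasDegTwoBoundary ht (disjoint_newlyDominated G S y) hB) hU
  have := hs.six_le_sum_surplus ht' hxz hy hdeg hx hz hB
  have := bonus_le_sum_bonus G S (self_mem_newlyDominated (G := G) hy)
  have := hm.three_le_bonus
  refine hasGoodMove_of_fortyFive_le_gain ht hS htriple.nonempty ?_
  omega

lemma IsMarked.hasGoodMove {y : V} (hm : IsMarked G S y) (ht : EdgesInTriangles G)
    (hS : IsSparse G S) (hN : NoWhiteTriangle G S) (hy : y ∉ S) (hdeg : whiteDeg G S y = 2) :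
    HasGoodMove G (potential G) 27 S := by
  by_cases hleaf : ∃ x ∈ whiteNbrs G S y, whiteDeg G S x = 2 ∧
      ∃ p ∈ whiteNbrs G S x, whiteDeg G S p = 1
  · obtain ⟨x, hx, hdegx, p, hp, hdegp⟩ := hleaf
    exact hm.hasGoodMove_of_leaf ht hS hN hy hdeg hx hdegx hp hdegp
  refine hm.hasGoodMove_of_hasDegTwoBoundary ht hS hN hy hdeg <|
    hasDegTwoBoundary_newlyDominated fun x hx q hq => ?_
  obtain ⟨hxS, hyx⟩ := mem_whiteNbrs.1 hx
  obtain ⟨hqS, hxq⟩ := mem_whiteNbrs.1 hq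
  have := hS.whiteDeg_le_two hxS
  have := hS.whiteDeg_le_two hqS
  have := whiteDeg_pos hqS hxq
  have := whiteDeg_pos hxS hxq.symm
  by_cases hdegx : whiteDeg G S x = 2
  · have : whiteDeg G S q ≠ 1 := fun h => hleaf ⟨x, hx, hdegx, q, hq, h⟩
    omega
  · rwa [eq_of_whiteDeg_eq_one (by omega) hqS hxq hy hyx.symm]

lemma IsSparse.contacts_eq_empty_of_whiteDeg_union_eq_two (hS : IsSparse G S) (hA : Disjoint A S)
    (hu : u ∉ S) (hdeg : whiteDeg G (S ∪ A) u = 2) :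
    whiteDeg G S u = 2 ∧ contacts G A u = ∅ := by
  have := hS.whiteDeg_le_two hu
  have := whiteDeg_union_add_card_contacts (G := G) hA u
  exact ⟨by omega, card_eq_zero.1 (by omega)⟩

lemma NoMarkedDegTwo.four_le_surplus {k : ℤ} (hM : NoMarkedDegTwo G S) (hS : IsSparse G S)
    (hA : Disjoint A S) (hu : u ∉ S ∪ A) (hm : IsMarked G (S ∪ A) u)
    (hdeg : whiteDeg G (S ∪ A) u = 2) : 4 ≤ surplus G S A k u := by
  have huS : u ∉ S := fun h => hu (mem_union_left _ h)
  obtain ⟨hdegS, hc⟩ := hS.contacts_eq_empty_of_whiteDeg_union_eq_two hA huS hdeg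
  rw [surplus_eq_netDrop hc]
  exact four_le_netDrop (one_le_card_newPendants_of_not_adj (contacts_eq_empty_iff.1 hc) hm
    (hM u huS hdegS)) hdeg.ge

lemma hasGoodMove_of_marked_leaf {x y : V} (ht : EdgesInTriangles G) (hS : IsSparse G S)
    (hN : NoWhiteTriangle G S) (hM : NoMarkedDegTwo G S) (hy : y ∉ S) (hdeg : whiteDeg G S y = 2)
    (hx : x ∈ whiteNbrs G S y) (hdegx : whiteDeg G S x = 1) (hm : IsMarked G S x) :
    HasGoodMove G (potential G) 27 S := by
  have hdisj := disjoint_newlyDominated G S y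
  have htriple := hS.isTripleMove_one hy hdeg hx hdegx
  have hgain := fun U => htriple.gain_ge hS (U := U) (by norm_num : (0 : ℤ) ≤ 5)
    fun q hq => hN.surplus_five_nonneg ht hdisj hq
  have := bonus_le_sum_bonus G S (whiteNbrs_subset_newlyDominated G S y hx)
  have := hm.four_le_bonus hdegx.le
  refine hasGoodMove_of_forty_le_gain ht hS htriple.nonempty ?_ fun u hu hmu hdegu => ?_
  · have := hgain ∅ (disjoint_empty_left _)
    rw [sum_empty] at this
    omega
  · have := hM.four_le_surplus (k := 5) hS hdisj hu hmu hdegu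
    have := card_markedNbrs_le G (S ∪ newlyDominated G S y) u
    have := hgain {u} (disjoint_singleton_left.2 hu)
    rw [sum_singleton] at this
    omega

lemma NoMarkedDegTwo.one_le_surplus (hM : NoMarkedDegTwo G S) (hL : NoMarkedLeaf G S)
    (hS : IsSparse G S) (hu : u ∉ S) (hdeg : whiteDeg G S u = 2)
    (hpos : 1 ≤ whiteDeg G (S ∪ A) q) (hq : q ∈ markedNbrs G (S ∪ A) u) :
    1 ≤ surplus G S A 5 q := by
  obtain ⟨hq, hmq⟩ := mem_filter.1 hq
  obtain ⟨hqU, huq⟩ := mem_whiteNbrs.1 hq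
  have hqS : q ∉ S := fun h => hqU (mem_union_left _ h)
  have hold : ¬ IsMarked G S q := by
    have := hS.whiteDeg_le_two hqS
    have := whiteDeg_pos hu huq.symm
    by_cases hdegq : whiteDeg G S q = 2
    · exact hM q hqS hdegq
    · exact hL u hu hdeg q (mem_whiteNbrs.2 ⟨hqS, huq⟩) (by omega)
  rcases (contacts G A q).eq_empty_or_nonempty with hc | hc
  · have := three_le_netDrop (one_le_card_newPendants_of_not_adj
      (contacts_eq_empty_iff.1 hc) hmq hold) hpos
    rw [surplus_eq_netDrop hc]
    omega
  · have := neg_four_le_netDrop hpos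
    have := card_pos.2 hc
    rw [surplus]
    omega

lemma NoMarkedDegTwo.four_add_card_markedNbrs_le_sum_surplus (hM : NoMarkedDegTwo G S)
    (hL : NoMarkedLeaf G S) (hS : IsSparse G S) (hA : Disjoint A S) (hu : u ∉ S ∪ A)
    (hmu : IsMarked G (S ∪ A) u) (hdeg : whiteDeg G (S ∪ A) u = 2) :
    4 + (#(markedNbrs G (S ∪ A) u) : ℤ) ≤
      ∑ q ∈ insert u (markedNbrs G (S ∪ A) u), surplus G S A 5 q := by
  have huS : u ∉ S := fun h => hu (mem_union_left _ h)
  have hdegS := (hS.contacts_eq_empty_of_whiteDeg_union_eq_two hA huS hdeg).1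
  have hsum : #(markedNbrs G (S ∪ A) u) • (1 : ℤ) ≤
      ∑ q ∈ markedNbrs G (S ∪ A) u, surplus G S A 5 q :=
    card_nsmul_le_sum _ _ _ fun q hq => hM.one_le_surplus hL hS huS hdegS
      (whiteDeg_pos hu (mem_whiteNbrs.1 (mem_filter.1 hq).1).2.symm) hq
  have := hM.four_le_surplus (k := 5) hS hA hu hmu hdeg
  have hnotMem : u ∉ markedNbrs G (S ∪ A) u := fun h =>
    self_notMem_whiteNbrs (mem_filter.1 h).1
  rw [sum_insert hnotMem]
  rw [nsmul_eq_mul, mul_one] at hsum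
  omega

lemma NoMarkedLeaf.hasGoodMove {x y : V} (hL : NoMarkedLeaf G S) (ht : EdgesInTriangles G)
    (hS : IsSparse G S) (hN : NoWhiteTriangle G S) (hM : NoMarkedDegTwo G S) (hy : y ∉ S)
    (hdeg : whiteDeg G S y = 2) (hx : x ∈ whiteNbrs G S y) (hdegx : whiteDeg G S x = 1) :
    HasGoodMove G (potential G) 27 S := by
  have hdisj := disjoint_newlyDominated G S y
  have htriple := hS.isTripleMove_one hy hdeg hx hdegx
  have hgain := fun U => htriple.gain_ge hS (U := U) (by norm_num : (0 : ℤ) ≤ 5)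
    fun q hq => hN.surplus_five_nonneg ht hdisj hq
  have := sum_nonneg fun a (_ : a ∈ newlyDominated G S y) => bonus_nonneg G S a
  refine hasGoodMove_of_forty_le_gain ht hS htriple.nonempty ?_ fun u hu hmu hdegu => ?_
  · have := hgain ∅ (disjoint_empty_left _)
    rw [sum_empty] at this
    omega
  · have hU : Disjoint (insert u (markedNbrs G (S ∪ newlyDominated G S y) u))
        (S ∪ newlyDominated G S y) := by
      rw [disjoint_insert_left, disjoint_left]
      exact ⟨hu, fun q hq => (mem_whiteNbrs.1 (mem_filter.1 hq).1).1⟩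
    have := hM.four_add_card_markedNbrs_le_sum_surplus hL hS hdisj hu hmu hdegu
    have := hgain _ hU
    omega

/-! ### Cycles of white vertices -/

lemma IsTripleMove.hasDegTwoBoundary (h : IsTripleMove G S v 2) (hS : IsSparse G S)
    (hC : DegTwoClosed G S) : HasDegTwoBoundary G S (newlyDominated G S v) :=
  fun q hq a ha hqa => by
    have haS := disjoint_left.1 (disjoint_newlyDominated G S v) ha
    exact hC a haS (h.whiteDeg_eq_two hS ha hq hqa.symm) q
      (mem_whiteNbrs.2 ⟨fun hqS => hq (mem_union_left _ hqS), hqa.symm⟩)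

lemma IsTripleMove.gain_ge_of_degTwoClosed (h : IsTripleMove G S v 2) (ht : EdgesInTriangles G)
    (hS : IsSparse G S) (hN : NoWhiteTriangle G S) (hC : DegTwoClosed G S) {U : Finset V}
    (hU : Disjoint U (S ∪ newlyDominated G S v)) :
    37 + 7 * #(drained G S (newlyDominated G S v)) +
      ∑ q ∈ U, surplus G S (newlyDominated G S v) 4 q ≤ gain G S (newlyDominated G S v) := by
  have := h.gain_ge hS (by norm_num : (0 : ℤ) ≤ 4)
    (hN.surplus_four_nonneg_of_hasDegTwoBoundary ht (disjoint_newlyDominated G S v)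
      (h.hasDegTwoBoundary hS hC)) hU
  have := sum_nonneg fun a (_ : a ∈ newlyDominated G S v) => bonus_nonneg G S a
  push_cast at *
  linarith

lemma HasDrainingMove.hasGoodMove {y : V} (h : HasDrainingMove G S y)
    (ht : EdgesInTriangles G) (hS : IsSparse G S) (hN : NoWhiteTriangle G S)
    (hM : NoMarkedDegTwo G S) (hC : DegTwoClosed G S) : HasGoodMove G (potential G) 27 S := by
  obtain ⟨v, htriple, -, hdrained⟩ := h
  have := card_pos.2 hdrained
  refine hasGoodMove_of_forty_le_gain ht hS htriple.nonempty ?_ fun u hu hmu hdegu => ?_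
  · have := htriple.gain_ge_of_degTwoClosed ht hS hN hC (disjoint_empty_left _)
    rw [sum_empty] at this
    omega
  · have hgain := htriple.gain_ge_of_degTwoClosed ht hS hN hC (disjoint_singleton_left.2 hu)
    have := hM.four_le_surplus (k := 4) hS (disjoint_newlyDominated G S v) hu hmu hdegu
    have := card_markedNbrs_le G (S ∪ newlyDominated G S v) u
    rw [sum_singleton] at hgain
    omega

lemma IsLinked.hasGoodMove_of_adj {x y z s : V} (hs : IsLinked G S x y s) (ht : EdgesInTriangles G)
    (hS : IsSparse G S) (hN : NoWhiteTriangle G S) (hM : NoMarkedDegTwo G S)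
    (hC : DegTwoClosed G S) (hy : y ∉ S) (hdeg : whiteDeg G S y = 2) (hx : x ∈ whiteNbrs G S y)
    (hz : z ∈ whiteNbrs G S y) (hsz : G.Adj s z) : HasGoodMove G (potential G) 27 S := by
  rcases hasDrainingMove_or_exists_isLinked ht hS hN hy hdeg hz with hdrain | ⟨t, ht'⟩
  · exact hdrain.hasGoodMove ht hS hN hM hC
  have hst : s ≠ t := by
    rintro rfl
    exact ht'.not_adj_left hsz
  have htriple := hS.isTripleMove_two hy hdeg
  have hB := htriple.hasDegTwoBoundary hS hC
  have hU : Disjoint {s, t} (S ∪ newlyDominated G S y) := by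
    rw [disjoint_insert_left, disjoint_singleton_left]
    exact ⟨hs.notMem_union_newlyDominated, ht'.notMem_union_newlyDominated⟩
  have hgain := htriple.gain_ge_of_degTwoClosed ht hS hN hC hU
  have := hs.three_add_le_surplus hy hdeg hx hB
  have := ht'.three_add_le_surplus hy hdeg hz hB
  have := card_pos.2 ⟨z, mem_contacts.2 ⟨whiteNbrs_subset_newlyDominated G S y hz, hsz⟩⟩
  refine hasGoodMove_of_fortyFive_le_gain ht hS htriple.nonempty ?_
  rw [sum_pair hst] at hgain
  omega

/-- A vertex linked to an edge `xy`, where `y` has two white neighbours, is adjacent to no white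
neighbour of `y`. -/
def LinksLoose (G : SimpleGraph V) (S : Finset V) : Prop :=
  ∀ x y s, y ∉ S → whiteDeg G S y = 2 → x ∈ whiteNbrs G S y → IsLinked G S x y s →
    ∀ z ∈ whiteNbrs G S y, ¬ G.Adj s z

/-- The white neighbours of `s` avoid `x`, `y` and the white neighbours of `x`, and the other white
neighbour of `y` can only be adjacent to one of them. -/
lemma LinksLoose.exists_contacts_eq_empty {x y s : V} (hL : LinksLoose G S) (hS : IsSparse G S)
    (hC : DegTwoClosed G S) (hy : y ∉ S) (hdeg : whiteDeg G S y = 2) (hx : x ∈ whiteNbrs G S y)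
    (hs : IsLinked G S x y s) {P : Finset V} (hP : P ⊆ whiteNbrs G S s) (hcard : 2 ≤ #P) :
    ∃ q ∈ P, contacts G (newlyDominated G S y) q = ∅ := by
  by_contra! hcontacts
  obtain ⟨hxS, hyx⟩ := mem_whiteNbrs.1 hx
  have hdegx := hC y hy hdeg x hx
  obtain ⟨z, hz⟩ : ∃ z, (whiteNbrs G S y).erase x = {z} := by
    rw [← card_eq_one, card_erase_of_mem hx, ← whiteDeg, hdeg]
  obtain ⟨hzS, hyz⟩ := mem_whiteNbrs.1 (mem_of_mem_erase (hz ▸ mem_singleton_self z))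
  have hadj : ∀ q ∈ P, q ∉ S ∧ G.Adj z q := fun q hq => by
    obtain ⟨hqS, hsq⟩ := mem_whiteNbrs.1 (hP hq)
    obtain ⟨a, ha⟩ := hcontacts q hq
    obtain ⟨ha, hqa⟩ := mem_contacts.1 ha
    have hqy : ¬ G.Adj q y := fun h =>
      hL x y s hy hdeg hx hs q (mem_whiteNbrs.2 ⟨hqS, h.symm⟩) hsq
    have hqx : ¬ G.Adj q x := fun h => hL y x s hxS hdegx (mem_whiteNbrs.2 ⟨hy, hyx.symm⟩)
      hs.symm q (mem_whiteNbrs.2 ⟨hqS, h.symm⟩) hsq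
    have hay : a ∈ whiteNbrs G S y := by
      rw [newlyDominated_of_notMem hy, mem_insert] at ha
      exact ha.resolve_left fun h => hqy (h ▸ hqa)
    have haz : a ∈ ({z} : Finset V) := hz ▸ mem_erase.2 ⟨fun h => hqx (h ▸ hqa), hay⟩
    exact ⟨hqS, (mem_singleton.1 haz ▸ hqa).symm⟩
  have hyP : y ∉ P := fun h => hs.not_adj_right (mem_whiteNbrs.1 (hP h)).2
  have hsub : insert y P ⊆ whiteNbrs G S z :=
    insert_subset (mem_whiteNbrs.2 ⟨hy, hyz.symm⟩) fun q hq => mem_whiteNbrs.2 (hadj q hq)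
  have := card_le_card hsub
  have := hS.whiteDeg_le_two hzS
  rw [card_insert_of_notMem hyP, ← whiteDeg] at *
  omega

/-- If both white neighbours of `s` are marked, one of them is newly marked and contributes. -/
lemma LinksLoose.forty_three_add_card_markedNbrs_le_gain {x y s t : V} (hL : LinksLoose G S)
    (ht : EdgesInTriangles G) (hS : IsSparse G S) (hN : NoWhiteTriangle G S)
    (hM : NoMarkedDegTwo G S) (hC : DegTwoClosed G S) (hy : y ∉ S) (hdeg : whiteDeg G S y = 2)
    (hx : x ∈ whiteNbrs G S y) (hs : IsLinked G S x y s)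
    (ht' : 3 ≤ surplus G S (newlyDominated G S y) 4 t) (htU : t ∉ S ∪ newlyDominated G S y)
    (hst : s ≠ t) (hm : IsMarked G (S ∪ newlyDominated G S y) s)
    (hdegs : whiteDeg G (S ∪ newlyDominated G S y) s = 2) :
    43 + (#(markedNbrs G (S ∪ newlyDominated G S y) s) : ℤ) ≤
      gain G S (newlyDominated G S y) := by
  have hdisj := disjoint_newlyDominated G S y
  have hsU := hs.notMem_union_newlyDominated
  have hsS : s ∉ S := fun h => hsU (mem_union_left _ h)
  have hgain := fun q => (hS.isTripleMove_two hy hdeg).gain_ge_of_degTwoClosed ht hS hN hC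
    (U := {s, q})
  have hsurplus := hM.four_le_surplus (k := 4) hS hdisj hsU hm hdegs
  have hmarked := card_markedNbrs_le G (S ∪ newlyDominated G S y) s
  by_cases hcard : 2 ≤ #(markedNbrs G (S ∪ newlyDominated G S y) s)
  · have hdegS := (hS.contacts_eq_empty_of_whiteDeg_union_eq_two hdisj hsS hdegs).1
    have hsub : markedNbrs G (S ∪ newlyDominated G S y) s ⊆ whiteNbrs G S s :=
      (filter_subset _ _).trans (whiteNbrs_union G S _ s ▸ sdiff_subset)
    obtain ⟨q, hq, hcq⟩ := hL.exists_contacts_eq_empty hS hC hy hdeg hx hs hsub hcard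
    have hqU := (mem_whiteNbrs.1 (mem_filter.1 hq).1).1
    have hdegq := whiteDeg_union_add_card_contacts (G := G) hdisj q
    rw [hcq, card_empty, hC s hsS hdegS q (hsub hq)] at hdegq
    have := hM.four_le_surplus (k := 4) hS hdisj hqU (mem_filter.1 hq).2 hdegq
    have hsq : s ≠ q := (mem_whiteNbrs.1 (hsub hq)).2.ne
    have := hgain q (by simp only [disjoint_insert_left, disjoint_singleton_left]; exact ⟨hsU, hqU⟩)
    rw [sum_pair hsq] at this
    omega
  · have := hgain t (by simp only [disjoint_insert_left, disjoint_singleton_left]; exact ⟨hsU, htU⟩)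
    rw [sum_pair hst] at this
    omega

lemma LinksLoose.hasGoodMove {x y z s t : V} (hL : LinksLoose G S) (ht : EdgesInTriangles G)
    (hS : IsSparse G S) (hN : NoWhiteTriangle G S) (hM : NoMarkedDegTwo G S)
    (hC : DegTwoClosed G S) (hy : y ∉ S) (hdeg : whiteDeg G S y = 2) (hx : x ∈ whiteNbrs G S y)
    (hz : z ∈ whiteNbrs G S y) (hxz : x ≠ z) (hs : IsLinked G S x y s) (ht' : IsLinked G S z y t) :
    HasGoodMove G (potential G) 27 S := by
  have hdisj := disjoint_newlyDominated G S y
  have htriple := hS.isTripleMove_two hy hdeg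
  have hB := htriple.hasDegTwoBoundary hS hC
  have hgain := fun U => htriple.gain_ge_of_degTwoClosed ht hS hN hC (U := U)
  have hsU := hs.notMem_union_newlyDominated
  have htU := ht'.notMem_union_newlyDominated
  by_cases hst : s = t
  · subst hst
    have hsurplus := hs.ten_le_surplus ht' hxz hy hdeg hx hz hB
    have := hgain {s} (disjoint_singleton_left.2 hsU)
    refine hasGoodMove_of_fortyFive_le_gain ht hS htriple.nonempty ?_
    rw [sum_singleton] at this
    omega
  have hstU : Disjoint {s, t} (S ∪ newlyDominated G S y) := by
    rw [disjoint_insert_left, disjoint_singleton_left]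
    exact ⟨hsU, htU⟩
  have hsum := hs.six_le_sum_surplus ht' hxz hy hdeg hx hz hB
  have hs3 := hs.three_add_le_surplus hy hdeg hx hB
  have ht3 := ht'.three_add_le_surplus hy hdeg hz hB
  refine hasGoodMove_of_forty_le_gain ht hS htriple.nonempty ?_ fun u hu hmu hdegu => ?_
  · have := hgain _ hstU
    omega
  by_cases hus : u = s
  · exact hus ▸ hL.forty_three_add_card_markedNbrs_le_gain ht hS hN hM hC hy hdeg hx hs
      (by omega) htU hst (hus ▸ hmu) (hus ▸ hdegu)
  by_cases hut : u = t
  · exact hut ▸ hL.forty_three_add_card_markedNbrs_le_gain ht hS hN hM hC hy hdeg hz ht'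
      (by omega) hsU (Ne.symm hst) (hut ▸ hmu) (hut ▸ hdegu)
  have := hM.four_le_surplus (k := 4) hS hdisj hu hmu hdegu
  have := card_markedNbrs_le G (S ∪ newlyDominated G S y) u
  have := hgain {u, s, t} (disjoint_insert_left.2 ⟨hu, hstU⟩)
  rw [sum_insert (by simp [hus, hut])] at this
  omega

lemma hasGoodMove_of_degTwoClosed {y : V} (ht : EdgesInTriangles G) (hS : IsSparse G S)
    (hN : NoWhiteTriangle G S) (hM : NoMarkedDegTwo G S) (hC : DegTwoClosed G S) (hy : y ∉ S)
    (hdeg : whiteDeg G S y = 2) : HasGoodMove G (potential G) 27 S := by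
  by_cases hL : LinksLoose G S
  · obtain ⟨x, hx, z, hz, hxz⟩ := one_lt_card.1 (hdeg.ge : 1 < #(whiteNbrs G S y))
    rcases hasDrainingMove_or_exists_isLinked ht hS hN hy hdeg hx with hdrain | ⟨s, hs⟩
    · exact hdrain.hasGoodMove ht hS hN hM hC
    rcases hasDrainingMove_or_exists_isLinked ht hS hN hy hdeg hz with hdrain | ⟨t, ht'⟩
    · exact hdrain.hasGoodMove ht hS hN hM hC
    exact hL.hasGoodMove ht hS hN hM hC hy hdeg hx hz hxz hs ht'
  · simp only [LinksLoose, not_forall, not_not] at hL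
    obtain ⟨x, y, s, hy, hdeg, hx, hs, z, hz, hsz⟩ := hL
    exact hs.hasGoodMove_of_adj ht hS hN hM hC hy hdeg hx hz hsz

lemma hasGoodMove_of_whiteDeg_eq_two {y : V} (ht : EdgesInTriangles G) (hS : IsSparse G S)
    (hy : y ∉ S) (hdeg : whiteDeg G S y = 2) : HasGoodMove G (potential G) 27 S := by
  by_cases hN : NoWhiteTriangle G S
  swap
  · exact hasGoodMove_of_not_noWhiteTriangle ht hS hN
  by_cases hM : NoMarkedDegTwo G S
  swap
  · simp only [NoMarkedDegTwo, not_forall, not_not] at hM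
    obtain ⟨u, hu, hdegu, hm⟩ := hM
    exact hm.hasGoodMove ht hS hN hu hdegu
  by_cases hC : DegTwoClosed G S
  · exact hasGoodMove_of_degTwoClosed ht hS hN hM hC hy hdeg
  simp only [DegTwoClosed, not_forall] at hC
  obtain ⟨u, hu, hdegu, q, hq, hdegq⟩ := hC
  have hq1 : whiteDeg G S q = 1 := by
    obtain ⟨hqS, huq⟩ := mem_whiteNbrs.1 hq
    have := hS.whiteDeg_le_two hqS
    have := whiteDeg_pos hu huq.symm
    omega
  by_cases hL : NoMarkedLeaf G S
  · exact hL.hasGoodMove ht hS hN hM hu hdegu hq hq1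
  · simp only [NoMarkedLeaf, not_forall, not_not] at hL
    obtain ⟨u, hu, hdegu, q, hq, hq1, hm⟩ := hL
    exact hasGoodMove_of_marked_leaf ht hS hN hM hu hdegu hq hq1 hm

/-! ### White vertices with at most one white neighbour -/

/-- Every white vertex has at most one white neighbour. -/
def WhiteDegLeOne (G : SimpleGraph V) (S : Finset V) : Prop :=
  ∀ v ∉ S, whiteDeg G S v ≤ 1

/-- The move `v` dominates two vertices, no edge joins them to a vertex that stays white, and some
blue vertex of positive weight loses its last white neighbours. -/
structure IsClosedPairMove (G : SimpleGraph V) (S : Finset V) (v : V) : Prop where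
  card_eq : #(newlyDominated G S v) = 2
  whiteDeg_eq_zero : ∀ a ∈ newlyDominated G S v, whiteDeg G (S ∪ newlyDominated G S v) a = 0
  drained_nonempty : (drained G S (newlyDominated G S v)).Nonempty

lemma not_adj_of_whiteDeg_eq_zero (h0 : ∀ a ∈ A, whiteDeg G (S ∪ A) a = 0) (hq : q ∉ S ∪ A) :
    ∀ a ∈ A, ¬ G.Adj q a := fun a ha hqa => by
  have := whiteDeg_pos hq hqa.symm
  have := h0 a ha
  omega

lemma gain_ge_of_whiteDeg_eq_zero {U : Finset V} (ht : EdgesInTriangles G) (hA : Disjoint A S)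
    (h0 : ∀ a ∈ A, whiteDeg G (S ∪ A) a = 0) (hU : Disjoint U (S ∪ A)) :
    15 * #A + ∑ a ∈ A, bonus G S a + 7 * #(drained G S A) + ∑ q ∈ U, netDrop G S A q ≤
      gain G S A := by
  have hgain := gain_ge_of_surplus_nonneg (k := 0) hA (fun a ha => (h0 a ha).trans_le zero_le_one)
    (fun q hq => surplus_nonneg_of_contacts_eq_empty ht hq
      (contacts_eq_empty_iff.2 (not_adj_of_whiteDeg_eq_zero h0 hq))) hU
  simpa [surplus] using hgain

lemma gain_singleton_ge_add_netDrop (ht : EdgesInTriangles G) (hu : u ∉ S)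
    (hdeg : whiteDeg G S u = 0) (hq : q ∉ S ∪ {u}) :
    15 + bonus G S u + netDrop G S {u} q ≤ gain G S {u} := by
  have hgain := gain_ge_of_whiteDeg_eq_zero (A := {u}) ht (disjoint_singleton_left.2 hu)
    (fun a ha => by
      rw [mem_singleton.1 ha, ← Nat.le_zero, ← hdeg]
      exact whiteDeg_union_le G S {u} u)
    (disjoint_singleton_left.2 hq)
  rw [sum_singleton, sum_singleton, card_singleton] at hgain
  omega

lemma gain_newlyDominated_cases_of_card_eq_one (hcard : #(newlyDominated G S v) = 1) :
    ∃ u ∉ S, newlyDominated G S v = {u} ∧ (whiteDeg G S u = 0 ∨ IsMarked G S u) := by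
  obtain ⟨u, hu⟩ := card_eq_one.1 hcard
  obtain ⟨huS, huv⟩ := mem_newlyDominated.1 (hu ▸ mem_singleton_self u)
  refine ⟨u, huS, hu, ?_⟩
  rcases huv with rfl | hvu
  · rw [card_newlyDominated_of_notMem huS] at hcard
    exact Or.inl (by omega)
  · by_cases hv : v ∈ S
    · exact Or.inr ⟨v, hv, hvu.symm, by rw [← card_newlyDominated_of_mem hv, hcard]⟩
    · have := whiteDeg_pos huS hvu
      rw [card_newlyDominated_of_notMem hv] at hcard
      omega

namespace WhiteDegLeOne

lemma union (hD : WhiteDegLeOne G S) (A : Finset V) : WhiteDegLeOne G (S ∪ A) := fun v hv =>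
  (whiteDeg_union_le G S A v).trans (hD v fun h => hv (mem_union_left _ h))

lemma eq_of_adj {x y z : V} (hD : WhiteDegLeOne G S) (hx : x ∉ S) (hy : y ∉ S) (hz : z ∉ S)
    (hxy : G.Adj x y) (hxz : G.Adj x z) : y = z :=
  card_le_one.1 (hD x hx) y (mem_whiteNbrs.2 ⟨hy, hxy⟩) z (mem_whiteNbrs.2 ⟨hz, hxz⟩)

lemma noWhiteTriangle (hD : WhiteDegLeOne G S) : NoWhiteTriangle G S :=
  fun _ _ _ hx hy hz hxy hxz hyz => hyz.ne (hD.eq_of_adj hx hy hz hxy hxz)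

lemma hasGoodMove_of_forty_le_gain (hD : WhiteDegLeOne G S) (ht : EdgesInTriangles G)
    (hS : IsSparse G S) (hv : (newlyDominated G S v).Nonempty)
    (hgain : 40 ≤ gain G S (newlyDominated G S v)) : HasGoodMove G (potential G) 27 S :=
  DominationGame.hasGoodMove_of_forty_le_gain ht hS hv hgain fun u hu _ hdeg => by
    have := hD.union _ u hu
    omega

/-- The blue vertex `v` is drained, and at most two edges leave its neighbourhood:
`45 + 7 - 2 * 5 ≥ 40`. -/
lemma hasGoodMove_of_whiteDeg_eq_three (hD : WhiteDegLeOne G S) (ht : EdgesInTriangles G)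
    (hS : IsSparse G S) (hv : v ∈ S) (hdeg : whiteDeg G S v = 3) (ha : a ∈ whiteNbrs G S v)
    (ha0 : whiteDeg G (S ∪ whiteNbrs G S v) a = 0) : HasGoodMove G (potential G) 27 S := by
  have hnew : newlyDominated G S v = whiteNbrs G S v := newlyDominated_of_mem hv
  have hdisj := hnew ▸ disjoint_newlyDominated G S v
  have hone : ∀ b ∈ whiteNbrs G S v, whiteDeg G (S ∪ whiteNbrs G S v) b ≤ 1 := fun b hb =>
    (whiteDeg_union_le G S _ b).trans (hD b (mem_whiteNbrs.1 hb).1)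
  have hsum : ∑ b ∈ whiteNbrs G S v, whiteDeg G (S ∪ whiteNbrs G S v) b ≤ 2 := by
    rw [← add_sum_erase _ _ ha, ha0, zero_add]
    refine (sum_le_card_nsmul _ _ 1 fun b hb => hone b (mem_of_mem_erase hb)).trans ?_
    rw [card_erase_of_mem ha, ← whiteDeg, hdeg, smul_eq_mul]
  have hdrained : v ∈ drained G S (whiteNbrs G S v) :=
    mem_filter.2 ⟨hv, by omega, hnew ▸ whiteDeg_union_newlyDominated G S v⟩
  have hgain := gain_ge_of_surplus_nonneg hdisj hone
    (fun q => hD.noWhiteTriangle.surplus_five_nonneg ht hdisj) (disjoint_empty_left _)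
  have := sum_nonneg fun b (_ : b ∈ whiteNbrs G S v) => bonus_nonneg G S b
  have := card_pos.2 ⟨v, hdrained⟩
  rw [sum_empty, ← whiteDeg, hdeg] at hgain
  refine hD.hasGoodMove_of_forty_le_gain (v := v) ht hS ?_ ?_ <;> rw [hnew]
  exacts [⟨a, ha⟩, by omega]

lemma ten_add_bonus_le_gain_singleton (hD : WhiteDegLeOne G S) (ht : EdgesInTriangles G)
    (hu : u ∉ S) : 10 + bonus G S u ≤ gain G S {u} := by
  have := hD u hu
  interval_cases hdeg : whiteDeg G S u
  · exact (gain_singleton_of_whiteDeg_eq_zero ht hu hdeg).trans' (by norm_num)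
  · exact gain_singleton_of_whiteDeg_eq_one ht hu hdeg

/-- The vertex dominated last is isolated and white, or marked by the played vertex. -/
lemma twentyFour_le_gain (hD : WhiteDegLeOne G S) (ht : EdgesInTriangles G) (hS : IsSparse G S)
    (hcard : 1 < #(newlyDominated G S v)) : 24 ≤ gain G S (newlyDominated G S v) := by
  by_cases hv : v ∈ S
  · rw [newlyDominated_of_mem hv] at *
    obtain ⟨a, ha, b, hb, hab⟩ := one_lt_card.1 hcard
    have hfirst := hD.ten_add_bonus_le_gain_singleton ht (mem_whiteNbrs.1 hb).1
    have hmono := hS.gain_singleton_le ht (mem_erase.2 ⟨hab.symm, hb⟩)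
    have haS : a ∉ S ∪ (whiteNbrs G S v).erase a := by simp [(mem_whiteNbrs.1 ha).1]
    have hlast := (hD.union _).ten_add_bonus_le_gain_singleton ht haS
    have := (isMarked_union_erase hv ha).four_le_bonus (hD.union _ a haS)
    have := bonus_nonneg G S b
    rw [← gain_erase_add ha]
    omega
  · rw [card_newlyDominated_of_notMem hv] at hcard
    obtain ⟨a, ha⟩ := card_pos.1 (by omega : 0 < whiteDeg G S v)
    have hfirst := hD.ten_add_bonus_le_gain_singleton ht (mem_whiteNbrs.1 ha).1
    have hmono := hS.gain_singleton_le ht ha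
    have hlast := fifteen_le_gain_singleton_union_whiteNbrs ht hv
    have := bonus_nonneg G S a
    rw [gain_newlyDominated_of_notMem hv]
    omega

end WhiteDegLeOne

/-! ### Closed pairs -/

namespace IsClosedPairMove

lemma nonempty (h : IsClosedPairMove G S v) : (newlyDominated G S v).Nonempty :=
  card_pos.1 (by rw [h.card_eq]; norm_num)

lemma gain_ge (h : IsClosedPairMove G S v) (ht : EdgesInTriangles G) {U : Finset V}
    (hU : Disjoint U (S ∪ newlyDominated G S v)) :
    37 + ∑ a ∈ newlyDominated G S v, bonus G S a +
      ∑ q ∈ U, netDrop G S (newlyDominated G S v) q ≤ gain G S (newlyDominated G S v) := by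
  have hgain :=
    gain_ge_of_whiteDeg_eq_zero ht (disjoint_newlyDominated G S v) h.whiteDeg_eq_zero hU
  have := card_pos.2 h.drained_nonempty
  rw [h.card_eq] at hgain
  omega

lemma gain_ge_add_netDrop (h : IsClosedPairMove G S v) (ht : EdgesInTriangles G)
    (hq : q ∉ S ∪ newlyDominated G S v) :
    37 + netDrop G S (newlyDominated G S v) q ≤ gain G S (newlyDominated G S v) := by
  have hgain := h.gain_ge ht (disjoint_singleton_left.2 hq)
  have := sum_nonneg fun a (_ : a ∈ newlyDominated G S v) => bonus_nonneg G S a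
  rw [sum_singleton] at hgain
  omega

lemma gain_ge_add_bonus (h : IsClosedPairMove G S v) (ht : EdgesInTriangles G)
    (ha : a ∈ newlyDominated G S v) :
    37 + bonus G S a ≤ gain G S (newlyDominated G S v) := by
  have hgain := h.gain_ge ht (disjoint_empty_left _)
  have := bonus_le_sum_bonus G S ha
  rw [sum_empty] at hgain
  omega

lemma thirtySeven_le_gain (h : IsClosedPairMove G S v) (ht : EdgesInTriangles G) :
    37 ≤ gain G S (newlyDominated G S v) := by
  obtain ⟨a, ha⟩ := h.nonempty
  have := h.gain_ge_add_bonus ht ha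
  have := bonus_nonneg G S a
  omega

lemma not_adj (h : IsClosedPairMove G S v) (hq : q ∉ S ∪ newlyDominated G S v) :
    ∀ a ∈ newlyDominated G S v, ¬ G.Adj q a :=
  not_adj_of_whiteDeg_eq_zero h.whiteDeg_eq_zero hq

lemma whiteDeg_union_eq (h : IsClosedPairMove G S v) (hq : q ∉ S ∪ newlyDominated G S v) :
    whiteDeg G (S ∪ newlyDominated G S v) q = whiteDeg G S q :=
  whiteDeg_union_of_forall_not_adj (h.not_adj hq)

lemma hasGoodMove_of_isMarked (h : IsClosedPairMove G S v) (hD : WhiteDegLeOne G S)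
    (ht : EdgesInTriangles G) (hS : IsSparse G S) (ha : a ∈ newlyDominated G S v)
    (hm : IsMarked G S a) : HasGoodMove G (potential G) 27 S := by
  have := h.gain_ge_add_bonus ht ha
  have := hm.four_le_bonus (hD a (mem_newlyDominated.1 ha).1)
  exact hD.hasGoodMove_of_forty_le_gain ht hS h.nonempty (by omega)

end IsClosedPairMove

lemma WhiteDegLeOne.hasGoodMove_or_isClosedPairMove_of_adj (hD : WhiteDegLeOne G S)
    (ht : EdgesInTriangles G) (hS : IsSparse G S) (hu : u ∉ S) (hv : v ∉ S) (huv : G.Adj u v) :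
    HasGoodMove G (potential G) 27 S ∨ IsClosedPairMove G S u := by
  obtain ⟨w, hw, huw, hvw, h2⟩ := hD.noWhiteTriangle.exists_blue_common_nbr ht hu hv huv
  by_cases h3 : whiteDeg G S w = 3
  · refine Or.inl (hD.hasGoodMove_of_whiteDeg_eq_three ht hS hw h3
      (mem_whiteNbrs.2 ⟨hu, huw.symm⟩) (whiteDeg_union_eq_zero fun x hx hux => ?_))
    exact hD.eq_of_adj hu hv hx huv hux ▸ mem_whiteNbrs.2 ⟨hv, hvw.symm⟩
  have hdisj := disjoint_newlyDominated G S u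
  have hself : u ∈ newlyDominated G S u := self_mem_newlyDominated hu
  refine Or.inr ⟨?_, fun a ha => ?_, w, mem_filter.2 ⟨hw, h2, ?_⟩⟩
  · have := hD u hu
    have := whiteDeg_pos hv huv
    rw [card_newlyDominated_of_notMem hu]
    omega
  · obtain ⟨haS, rfl | hua⟩ := mem_newlyDominated.1 ha
    · exact whiteDeg_union_newlyDominated G S a
    · have := whiteDeg_union_lt hdisj hself hua.symm
      have := hD a haS
      omega
  · have := hS.whiteDeg_le_three w
    have := whiteDeg_union_add_two_le hdisj hself
      (mem_newlyDominated.2 ⟨hv, Or.inr huv⟩) huv.ne huw.symm hvw.symm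
    omega

lemma WhiteDegLeOne.hasGoodMove_or_isClosedPairMove_of_mem (hD : WhiteDegLeOne G S)
    (ht : EdgesInTriangles G) (hS : IsSparse G S) (hv : v ∈ S) (h2 : 2 ≤ whiteDeg G S v)
    (h0 : ∀ a ∈ whiteNbrs G S v, whiteDeg G S a = 0) :
    HasGoodMove G (potential G) 27 S ∨ IsClosedPairMove G S v := by
  have hzero : ∀ A, ∀ a ∈ whiteNbrs G S v, whiteDeg G (S ∪ A) a = 0 := fun A a ha =>
    Nat.le_zero.1 (h0 a ha ▸ whiteDeg_union_le G S A a)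
  by_cases h3 : whiteDeg G S v = 3
  · obtain ⟨a, ha⟩ := card_pos.1 (two_pos.trans_le h2)
    exact Or.inl (hD.hasGoodMove_of_whiteDeg_eq_three ht hS hv h3 ha (hzero _ a ha))
  · have := hS.whiteDeg_le_three v
    refine Or.inr ⟨?_, fun a ha => ?_, v, mem_filter.2 ⟨hv, h2, ?_⟩⟩
    · rw [card_newlyDominated_of_mem hv]
      omega
    · exact hzero _ a (newlyDominated_of_mem hv ▸ ha)
    · exact whiteDeg_union_newlyDominated G S v

lemma WhiteDegLeOne.hasGoodMove_of_isMarked (hD : WhiteDegLeOne G S) (ht : EdgesInTriangles G)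
    (hS : IsSparse G S) (hu : u ∉ S) (hm : IsMarked G S u) (hdeg : whiteDeg G S u ≠ 0) :
    HasGoodMove G (potential G) 27 S := by
  obtain ⟨v, hv⟩ := card_pos.1 (Nat.pos_of_ne_zero hdeg)
  obtain ⟨hvS, huv⟩ := mem_whiteNbrs.1 hv
  rcases hD.hasGoodMove_or_isClosedPairMove_of_adj ht hS hu hvS huv with hgood | hpair
  exacts [hgood, hpair.hasGoodMove_of_isMarked hD ht hS (self_mem_newlyDominated hu) hm]

lemma seventeen_le_gain_singleton (ht : EdgesInTriangles G) (hu : u ∉ S)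
    (hudeg : whiteDeg G S u = 0) (hq : q ∉ S) (hqu : q ≠ u) (hr : r ∈ S) (hru : G.Adj r u)
    (hrq : G.Adj r q) (hrdeg : whiteDeg G S r = 2)
    (hqdeg : whiteDeg G S q = 0 → ¬ IsMarked G S q) : 17 ≤ gain G S {u} := by
  have hquS : q ∉ S ∪ {u} := by simp [hq, hqu]
  have hnot : ∀ a ∈ ({u} : Finset V), ¬ G.Adj q a := fun a ha hqa => by
    rw [mem_singleton.1 ha] at hqa
    have := whiteDeg_pos hq hqa.symm
    omega
  have hnew : 1 ≤ #(newPendants G S {u} q) := by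
    have := whiteDeg_union_lt (disjoint_singleton_left.2 hu) (mem_singleton_self u) hru
    have := whiteDeg_pos hquS hrq
    exact one_le_card_newPendants hr hrq.symm hrdeg.ge (by omega)
  have hdrop : 2 ≤ netDrop G S {u} q := by
    by_cases hdeg : whiteDeg G S q = 0
    · exact two_le_netDrop ht hq hdeg (hqdeg hdeg) hnew
    · refine (three_le_netDrop hnew ?_).trans' (by norm_num)
      rw [whiteDeg_union_of_forall_not_adj hnot]
      omega
  have := gain_singleton_ge_add_netDrop ht hu hudeg hquS
  have := bonus_nonneg G S u
  omega

lemma WhiteDegLeOne.exists_adj_whiteDeg_eq_two (hD : WhiteDegLeOne G S)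
    (ht : EdgesInTriangles G) (hS : IsSparse G S) (hisol : ∀ v, ∃ u, G.Adj u v)
    (hbad : ¬ HasGoodMove G (potential G) 27 S) (hu : u ∉ S ∪ A)
    (hdeg : whiteDeg G S u = 0) (hm : ¬ IsMarked G (S ∪ A) u) :
    ∃ r ∈ S, G.Adj r u ∧ whiteDeg G S r = 2 ∧
      whiteNbrs G (S ∪ A) r = whiteNbrs G S r := by
  obtain ⟨r, hru⟩ := hisol u
  have hrS := mem_of_whiteDeg_eq_zero hdeg hru.symm
  have huS : u ∉ S := fun h => hu (mem_union_left _ h)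
  have hthree : whiteDeg G S r ≠ 3 := fun h3 => hbad <|
    hD.hasGoodMove_of_whiteDeg_eq_three ht hS hrS h3 (mem_whiteNbrs.2 ⟨huS, hru⟩)
      (Nat.le_zero.1 (hdeg ▸ whiteDeg_union_le G S _ u))
  have hone : whiteDeg G (S ∪ A) r ≠ 1 := fun h1 =>
    hm ⟨r, mem_union_left _ hrS, hru.symm, h1⟩
  have := whiteDeg_pos hu hru
  have hle := whiteDeg_union_le G S A r
  have := hS.whiteDeg_le_three r
  refine ⟨r, hrS, hru, by omega, eq_of_subset_of_card_le ?_ ?_⟩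
  · rw [whiteNbrs_union]
    exact sdiff_subset
  · rw [← whiteDeg, ← whiteDeg]
    omega

namespace IsClosedPairMove

/-- A blue vertex `r` whose white neighbours are `u` and another vertex `q` becomes pendant when
`u` is dominated. -/
lemma fiftyFour_le_of_whiteDeg_eq_zero (h : IsClosedPairMove G S v) (hD : WhiteDegLeOne G S)
    (ht : EdgesInTriangles G) (hS : IsSparse G S) (hisol : ∀ v, ∃ u, G.Adj u v)
    (hbad : ¬ HasGoodMove G (potential G) 27 S) (hu : u ∉ S ∪ newlyDominated G S v)
    (hdeg : whiteDeg G (S ∪ newlyDominated G S v) u = 0) :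
    54 ≤ gain G S (newlyDominated G S v) + gain G (S ∪ newlyDominated G S v) {u} := by
  have hmove := h.thirtySeven_le_gain ht
  have hreply := gain_singleton_of_whiteDeg_eq_zero ht hu hdeg
  by_cases hm : IsMarked G (S ∪ newlyDominated G S v) u
  · have := hm.five_le_bonus hdeg
    omega
  have hdegS : whiteDeg G S u = 0 := h.whiteDeg_union_eq hu ▸ hdeg
  have huS : u ∉ S := fun h => hu (mem_union_left _ h)
  obtain ⟨r, hr, hru, hrdeg, hnbrs⟩ :=
    hD.exists_adj_whiteDeg_eq_two ht hS hisol hbad hu hdegS hm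
  obtain ⟨q, hq, hqu⟩ := exists_mem_ne (hrdeg.ge : 1 < #(whiteNbrs G S r)) u
  obtain ⟨hqT, hrq⟩ := mem_whiteNbrs.1 (hnbrs ▸ hq)
  have hqS := (mem_whiteNbrs.1 hq).1
  by_cases hqm : whiteDeg G S q = 0 ∧ IsMarked G (S ∪ newlyDominated G S v) q
  · have hold : ¬ IsMarked G S q := fun hold => by
      have h0 : ∀ a ∈ whiteNbrs G S r, whiteDeg G S a = 0 := fun a ha => by
        rw [whiteNbrs_eq_pair hrdeg hqu (mem_whiteNbrs.1 hq) ⟨huS, hru⟩, mem_insert,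
          mem_singleton] at ha
        rcases ha with rfl | rfl
        exacts [hqm.1, hdegS]
      rcases hD.hasGoodMove_or_isClosedPairMove_of_mem ht hS hr hrdeg.ge h0 with hgood | hpair
      · exact hbad hgood
      · exact hbad (hpair.hasGoodMove_of_isMarked hD ht hS
          (whiteNbrs_subset_newlyDominated G S r hq) hold)
    have := two_le_netDrop ht hqS hqm.1 hold
      (one_le_card_newPendants_of_not_adj (h.not_adj hqT) hqm.2 hold)
    have := h.gain_ge_add_netDrop ht hqT
    have := bonus_nonneg G (S ∪ newlyDominated G S v) u
    omega
  · have := seventeen_le_gain_singleton ht hu hdeg hqT hqu (mem_union_left _ hr) hru hrq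
      (by rw [whiteDeg, hnbrs, ← whiteDeg, hrdeg])
      fun hq0 hm => hqm ⟨h.whiteDeg_union_eq hqT ▸ hq0, hm⟩
    omega

lemma fiftyFour_le_of_isMarked (h : IsClosedPairMove G S v) (hD : WhiteDegLeOne G S)
    (ht : EdgesInTriangles G) (hS : IsSparse G S)
    (hbad : ¬ HasGoodMove G (potential G) 27 S) (hu : u ∉ S ∪ newlyDominated G S v)
    (hdeg : whiteDeg G (S ∪ newlyDominated G S v) u ≠ 0)
    (hm : IsMarked G (S ∪ newlyDominated G S v) u) :
    54 ≤ gain G S (newlyDominated G S v) + gain G (S ∪ newlyDominated G S v) {u} := by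
  have huS : u ∉ S := fun h => hu (mem_union_left _ h)
  have hold : ¬ IsMarked G S u := fun hold =>
    hbad (hD.hasGoodMove_of_isMarked ht hS huS hold (h.whiteDeg_union_eq hu ▸ hdeg))
  have := three_le_netDrop (one_le_card_newPendants_of_not_adj (h.not_adj hu) hm hold)
    (Nat.pos_of_ne_zero hdeg)
  have := h.gain_ge_add_netDrop ht hu
  have hD' := hD.union (newlyDominated G S v)
  have := hD'.ten_add_bonus_le_gain_singleton ht hu
  have := hm.four_le_bonus (hD' u hu)
  omega

lemma hasGoodMove (h : IsClosedPairMove G S v) (hD : WhiteDegLeOne G S)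
    (ht : EdgesInTriangles G) (hS : IsSparse G S) (hisol : ∀ v, ∃ u, G.Adj u v) :
    HasGoodMove G (potential G) 27 S := by
  by_contra hbad
  have hmove := h.thirtySeven_le_gain ht
  refine hbad ⟨v, h.nonempty, hmove.trans' (by norm_num), fun w hw => ?_⟩
  rw [potential_sub_eq]
  rcases (one_le_card.2 hw).lt_or_eq with hcard | hcard
  · have := (hD.union _).twentyFour_le_gain ht (hS.union _) hcard
    omega
  obtain ⟨u, hu, hnew, hcase⟩ := gain_newlyDominated_cases_of_card_eq_one hcard.symm
  rw [hnew]
  by_cases hdeg : whiteDeg G (S ∪ newlyDominated G S v) u = 0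
  · exact h.fiftyFour_le_of_whiteDeg_eq_zero hD ht hS hisol hbad hu hdeg
  · exact h.fiftyFour_le_of_isMarked hD ht hS hbad hu hdeg (hcase.resolve_left hdeg)

end IsClosedPairMove

/-! ### Sparse positions -/

lemma twentySeven_le_gain (ht : EdgesInTriangles G) (hisol : ∀ v, ∃ u, G.Adj u v)
    (hwhite : ∀ v ∉ S, whiteDeg G S v = 0) (hle : ∀ v, whiteDeg G S v ≤ 1)
    (hv : (newlyDominated G S v).Nonempty) : 27 ≤ gain G S (newlyDominated G S v) := by
  have hcard : #(newlyDominated G S v) = 1 := by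
    refine le_antisymm ?_ (one_le_card.2 hv)
    by_cases hvS : v ∈ S
    · exact card_newlyDominated_of_mem hvS ▸ hle v
    · rw [card_newlyDominated_of_notMem hvS, hwhite v hvS]
  obtain ⟨u, hu, hnew, -⟩ := gain_newlyDominated_cases_of_card_eq_one hcard
  have hall : AllNbrsPendant G S u := fun r hur =>
    le_antisymm (hle r) (whiteDeg_pos hu hur.symm)
  obtain ⟨r, hru⟩ := hisol u
  have hmarked : IsMarked G S u :=
    ⟨r, mem_of_whiteDeg_eq_zero (hwhite u hu) hru.symm, hru.symm, hall r hru.symm⟩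
  have hbonus : bonus G S u = 12 := by
    rw [bonus, if_pos hmarked, if_pos (hwhite u hu), if_pos hall]
  have := gain_singleton_of_whiteDeg_eq_zero ht hu (hwhite u hu)
  rw [hnew]
  omega

lemma hasGoodMove_of_whiteDeg_le_one (ht : EdgesInTriangles G) (hisol : ∀ v, ∃ u, G.Adj u v)
    (hwhite : ∀ v ∉ S, whiteDeg G S v = 0) (hle : ∀ v, whiteDeg G S v ≤ 1) (hu : u ∉ S) :
    HasGoodMove G (potential G) 27 S := by
  have hne : (newlyDominated G S u).Nonempty := ⟨u, self_mem_newlyDominated hu⟩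
  have hmove := twentySeven_le_gain ht hisol hwhite hle hne
  refine ⟨u, hne, hmove, fun w hw => ?_⟩
  have hreply := twentySeven_le_gain ht hisol
    (fun v hv => Nat.le_zero.1 <| (whiteDeg_union_le G S _ v).trans
      (hwhite v fun h => hv (mem_union_left _ h)).le)
    (fun v => (whiteDeg_union_le G S _ v).trans (hle v)) hw
  rw [potential_sub_eq]
  omega

lemma IsSparse.hasGoodMove (hS : IsSparse G S) (ht : EdgesInTriangles G)
    (hisol : ∀ v, ∃ u, G.Adj u v) (hu : u ∉ S) : HasGoodMove G (potential G) 27 S := by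
  by_cases htwo : ∃ y ∉ S, whiteDeg G S y = 2
  · obtain ⟨y, hy, hdeg⟩ := htwo
    exact hasGoodMove_of_whiteDeg_eq_two ht hS hy hdeg
  have hD : WhiteDegLeOne G S := fun v hv => by
    have := hS.whiteDeg_le_two hv
    have : whiteDeg G S v ≠ 2 := fun h => htwo ⟨v, hv, h⟩
    omega
  by_cases hwhite : ∀ v ∉ S, whiteDeg G S v = 0
  swap
  · push Not at hwhite
    obtain ⟨x, hx, hdeg⟩ := hwhite
    obtain ⟨y, hy⟩ := card_pos.1 (Nat.pos_of_ne_zero hdeg)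
    obtain ⟨hyS, hxy⟩ := mem_whiteNbrs.1 hy
    rcases hD.hasGoodMove_or_isClosedPairMove_of_adj ht hS hx hyS hxy with hgood | hpair
    exacts [hgood, hpair.hasGoodMove hD ht hS hisol]
  by_cases hle : ∀ v, whiteDeg G S v ≤ 1
  · exact hasGoodMove_of_whiteDeg_le_one ht hisol hwhite hle hu
  push Not at hle
  obtain ⟨v, hv⟩ := hle
  have hvS : v ∈ S := by_contra fun h => by have := hwhite v h; omega
  rcases hD.hasGoodMove_or_isClosedPairMove_of_mem ht hS hvS hv
    (fun a ha => hwhite a (mem_whiteNbrs.1 ha).1) with hgood | hpair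
  exacts [hgood, hpair.hasGoodMove hD ht hS hisol]

/-! ### Combining the two potentials -/

/-- The weight of a vertex in the plain potential. -/
noncomputable def plainWeight (G : SimpleGraph V) (S : Finset V) (v : V) : ℤ :=
  if v ∈ S then if 1 ≤ whiteDeg G S v then 7 else 0 else 15

/-- The plain potential, used as long as some move dominates at least four new vertices. -/
noncomputable def plainPotential (G : SimpleGraph V) (S : Finset V) : ℤ := ∑ v, plainWeight G S v

/-- The potential of the whole game: refined in sparse positions, plain in all others. -/
noncomputable def gamePotential (G : SimpleGraph V) (S : Finset V) : ℤ :=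
  if IsSparse G S then potential G S else plainPotential G S

lemma plainPotential_nonneg (G : SimpleGraph V) (S : Finset V) : 0 ≤ plainPotential G S :=
  sum_nonneg fun v _ => by unfold plainWeight; split_ifs <;> norm_num

lemma plainPotential_empty (G : SimpleGraph V) :
    plainPotential G ∅ = 15 * (Fintype.card V : ℤ) := by
  simp [plainPotential, plainWeight, mul_comm]

/-- The played vertex loses its last white neighbour, hence its whole weight. -/
lemma le_plainWeight_sub (hv : (newlyDominated G S v).Nonempty) (u : V) :
    (if u ∈ newlyDominated G S v then (8 : ℤ) else 0) + (if u = v then 7 else 0) ≤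
      plainWeight G S u - plainWeight G (S ∪ newlyDominated G S v) u := by
  have hle := whiteDeg_union_le G S (newlyDominated G S v) u
  have hsub : u ∈ newlyDominated G S v → u ∉ S := fun hu => (mem_newlyDominated.1 hu).1
  by_cases huv : u = v
  · subst huv
    have hself : u ∉ S → u ∈ newlyDominated G S u := fun hu =>
      mem_newlyDominated.2 ⟨hu, Or.inl rfl⟩
    have hzero := whiteDeg_union_newlyDominated G S u
    have hpos : u ∈ S → 1 ≤ whiteDeg G S u := fun hu =>
      card_newlyDominated_of_mem hu ▸ card_pos.2 hv
    simp only [plainWeight, mem_union, hzero]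
    split_ifs <;> first | omega | tauto
  · simp only [plainWeight, mem_union, huv]
    split_ifs <;> first | omega | tauto

lemma le_plainPotential_sub (hv : (newlyDominated G S v).Nonempty) :
    8 * (#(newlyDominated G S v) : ℤ) + 7 ≤
      plainPotential G S - plainPotential G (S ∪ newlyDominated G S v) := by
  have hsum := sum_le_sum (s := univ) fun u _ => le_plainWeight_sub hv u
  rw [sum_add_distrib, sum_sub_distrib, sum_ite_mem, sum_ite_eq', if_pos (mem_univ v),
    univ_inter, sum_const, nsmul_eq_mul] at hsum
  unfold plainPotential
  linarith

lemma bonus_le_seven_mul_card (ht : EdgesInTriangles G) (S : Finset V) (q : V) :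
    bonus G S q ≤ 7 * #{r ∈ S.filter (fun r => whiteDeg G S r = 1) | G.Adj q r} := by
  by_cases hmarked : IsMarked G S q
  swap
  · rw [bonus_of_not_isMarked hmarked]
    positivity
  obtain ⟨r, hr, hqr, hrdeg⟩ := hmarked
  have hmem : r ∈ {r ∈ S.filter (fun r => whiteDeg G S r = 1) | G.Adj q r} := by simp [*]
  have hone := card_pos.2 ⟨r, hmem⟩
  by_cases hall : AllNbrsPendant G S q ∧ whiteDeg G S q = 0
  · obtain ⟨w, hwr, hqw⟩ := ht.exists_adj_ne hqr
    have hwmem : w ∈ {r ∈ S.filter (fun r => whiteDeg G S r = 1) | G.Adj q r} := by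
      simp [hqw, hall.1 w hqw, mem_of_whiteDeg_eq_zero hall.2 hqw]
    have htwo := one_lt_card.2 ⟨w, hwmem, r, hmem, hwr⟩
    have := bonus_le_twelve G S q
    omega
  · have : bonus G S q ≤ 5 := by
      by_cases hdeg : whiteDeg G S q = 0
      · exact bonus_le_five fun h => hall ⟨h, hdeg⟩
      · exact (bonus_le_four (by omega)).trans (by norm_num)
    omega

lemma potential_le_plainPotential (ht : EdgesInTriangles G) (S : Finset V) :
    potential G S ≤ plainPotential G S := by
  set P := S.filter (fun r => whiteDeg G S r = 1)
  have hblue : ∑ v ∈ S, weight G S v + 7 * (#P : ℤ) = ∑ v ∈ S, plainWeight G S v := by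
    rw [card_filter, Nat.cast_sum, mul_sum, ← sum_add_distrib]
    refine sum_congr rfl fun v hv => ?_
    simp only [weight, plainWeight, hv, if_true]
    split_ifs <;> omega
  have hwhite : ∑ v ∈ Sᶜ, weight G S v ≤ ∑ v ∈ Sᶜ, plainWeight G S v + 7 * (#P : ℤ) := by
    rw [← sum_card_adj_of_whiteDeg_eq_one fun r hr => (mem_filter.1 hr).2, Nat.cast_sum, mul_sum,
      ← sum_add_distrib]
    refine sum_le_sum fun v hv => ?_
    have hvS := mem_compl.1 hv
    rw [weight, plainWeight, if_neg hvS, if_neg hvS]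
    exact add_le_add_right (bonus_le_seven_mul_card ht S v) 15
  rw [potential, plainPotential, ← sum_add_sum_compl S, ← sum_add_sum_compl S]
  linarith

lemma gamePotential_le_plainPotential (ht : EdgesInTriangles G) (S : Finset V) :
    gamePotential G S ≤ plainPotential G S := by
  unfold gamePotential
  split_ifs
  exacts [potential_le_plainPotential ht S, le_rfl]

lemma gamePotential_nonneg (G : SimpleGraph V) (S : Finset V) : 0 ≤ gamePotential G S := by
  unfold gamePotential
  split_ifs
  exacts [potential_nonneg G S, plainPotential_nonneg G S]

/-- Four new vertices and a reply: `(8 * 4 + 7) + (8 + 7) = 54`. -/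
lemma hasGoodMove_of_not_isSparse (ht : EdgesInTriangles G) (hS : ¬ IsSparse G S) :
    HasGoodMove G (gamePotential G) 27 S := by
  obtain ⟨v, hv⟩ : ∃ v, 3 < #(newlyDominated G S v) := by
    simpa only [IsSparse, not_forall, not_le] using hS
  have hne : (newlyDominated G S v).Nonempty := card_pos.1 (by omega)
  have hmove := le_plainPotential_sub hne
  have hstart : gamePotential G S = plainPotential G S := if_neg hS
  refine ⟨v, hne, ?_, fun w hw => ?_⟩
  · have := gamePotential_le_plainPotential ht (S ∪ newlyDominated G S v)
    omega
  · have hreply := le_plainPotential_sub hw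
    have := card_pos.2 hw
    have := gamePotential_le_plainPotential ht
      (S ∪ newlyDominated G S v ∪ newlyDominated G (S ∪ newlyDominated G S v) w)
    omega

theorem hasGoodMove_gamePotential (ht : EdgesInTriangles G) (hisol : ∀ v, ∃ u, G.Adj u v)
    (hS : S ≠ univ) : HasGoodMove G (gamePotential G) 27 S := by
  by_cases hsparse : IsSparse G S
  swap
  · exact hasGoodMove_of_not_isSparse ht hsparse
  obtain ⟨u, hu⟩ : ∃ u, u ∉ S := by simpa only [ne_eq, eq_univ_iff_forall, not_forall] using hS
  have heq : ∀ A, gamePotential G (S ∪ A) = potential G (S ∪ A) := fun A =>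
    if_pos (hsparse.union A)
  have hstart : gamePotential G S = potential G S := if_pos hsparse
  simpa only [HasGoodMove, hstart, heq, union_assoc] using hsparse.hasGoodMove ht hisol hu

theorem twentySeven_mul_gGammaGame_le (ht : EdgesInTriangles G)
    (hisol : ∀ v, ∃ u, G.Adj u v) : 27 * (gGammaGame G : ℤ) ≤ 15 * Fintype.card V :=
  calc 27 * (gGammaGame G : ℤ)
    _ ≤ gamePotential G ∅ := mul_gDomGameVal_le_of_hasGoodMove (gamePotential_nonneg G)
      (fun _ hS => hasGoodMove_gamePotential ht hisol hS) ∅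
    _ ≤ plainPotential G ∅ := gamePotential_le_plainPotential ht ∅
    _ = 15 * Fintype.card V := plainPotential_empty G

end DominationGame

/-- if `G` is a graph on `n` vertices with no isolated vertices in which
every edge belongs to a triangle, then `γ_g(G) ≤ (5/9) n`. -/
theorem stmt_10 (V : Type) [Fintype V] (G : SimpleGraph V)
    (hisol : ∀ v : V, ∃ u : V, G.Adj u v)
    (htri : ∀ u v : V, G.Adj u v → ∃ w : V, G.Adj u w ∧ G.Adj v w) :
    (gGammaGame G : ℝ) ≤ 5 / 9 * Fintype.card V := by
  have h : (27 * gGammaGame G : ℝ) ≤ 15 * Fintype.card V := by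
    exact_mod_cast DominationGame.twentySeven_mul_gGammaGame_le htri hisol
  linarith
end

section
/- The 3-uniform hypergraph H with vertex set {1,2,…,9} and edge set {{1,2,3},{4,5,6},{1,4,7},{2,5,8},{3,6,9}} satisfies γ_g(H) = γ_g'(H) = 4 = (4/9)·|V(H)|. -/
attribute [local instance 10] Classical.propDecidable

variable {V : Type}

/-- The closed neighborhood of a vertex in a hypergraph given by its edge set. -/
noncomputable def closedNbhd [Fintype V] (H : Finset (Finset V)) (v : V) : Finset V :=
  Finset.univ.filter (fun u => u = v ∨ ∃ e ∈ H, u ∈ e ∧ v ∈ e)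

/-- Value of the domination game on a hypergraph: `S` is the set of vertices already
dominated, `dom = true` iff Dominator is the next player to move.  A legal move is a vertex
dominating at least one new vertex; Dominator minimizes, Staller maximizes the total
number of moves, and both play optimally. -/
noncomputable def domGameVal [Fintype V] (H : Finset (Finset V)) (dom : Bool) (S : Finset V) :
    ℕ :=
  if h : (Finset.univ.filter fun v => ¬ closedNbhd H v ⊆ S).Nonempty then
    1 + (if dom then
        (Finset.univ.filter fun v => ¬ closedNbhd H v ⊆ S).attach.inf'
          (Finset.attach_nonempty_iff.mpr h)
          (fun v => domGameVal H false (S ∪ closedNbhd H v.1))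
      else
        (Finset.univ.filter fun v => ¬ closedNbhd H v ⊆ S).attach.sup'
          (Finset.attach_nonempty_iff.mpr h)
          (fun v => domGameVal H true (S ∪ closedNbhd H v.1)))
  else 0
termination_by (Finset.univ \ S).card
decreasing_by
  · exact card_sdiff_union_lt (Finset.mem_filter.mp v.2).2
  · exact card_sdiff_union_lt (Finset.mem_filter.mp v.2).2

/-- The game domination number (Dominator starts). -/
noncomputable def gammaGame [Fintype V] (H : Finset (Finset V)) : ℕ :=
  domGameVal H true ∅

/-- The Staller-start game domination number. -/
noncomputable def gammaGame' [Fintype V] (H : Finset (Finset V)) : ℕ :=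
  domGameVal H false ∅

/-- The 3-uniform hypergraph on vertices `1,…,9` (encoded as `Fin 9`, with vertex `i`
encoded as `i - 1`) with edges `{1,2,3}, {4,5,6}, {1,4,7}, {2,5,8}, {3,6,9}`. -/
noncomputable def gridHypergraph : Finset (Finset (Fin 9)) :=
  {({0, 1, 2} : Finset (Fin 9)), {3, 4, 5}, {0, 3, 6}, {1, 4, 7}, {2, 5, 8}}

/-! Write `1, …, 9` row by row in a `3 × 3` array. Every move dominates the whole column of the
vertex played, while a vertex of the bottom row `{7, 8, 9}`, which is not an edge, is dominated
only from its own column. So the game lasts until every column has been played in, and Staller can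
legally waste a move in a column already used: this forces a fourth move. Conversely, Dominator's
first move, an opening at `1` or a reply in another column and in another row forming an edge,
ensures that at most two vertices are undominated after the second move of the game, and each
further move dominates at least one of them.
-/

section DominationGame

variable [Fintype V] {H : Finset (Finset V)}

theorem mem_closedNbhd {u v : V} :
    u ∈ closedNbhd H v ↔ u = v ∨ ∃ e ∈ H, u ∈ e ∧ v ∈ e := by
  rw [closedNbhd, Finset.mem_filter_univ]

theorem mem_closedNbhd_self (H : Finset (Finset V)) (v : V) : v ∈ closedNbhd H v :=
  mem_closedNbhd.2 (.inl rfl)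

theorem mem_closedNbhd_comm {u v : V} : u ∈ closedNbhd H v ↔ v ∈ closedNbhd H u := by
  simp only [mem_closedNbhd, eq_comm, and_comm]

theorem not_closedNbhd_subset_empty (H : Finset (Finset V)) (v : V) : ¬ closedNbhd H v ⊆ ∅ :=
  fun h => Finset.notMem_empty v (h (mem_closedNbhd_self H v))

theorem exists_not_closedNbhd_subset (H : Finset (Finset V)) {S : Finset V}
    (hS : S ≠ Finset.univ) : ∃ v, ¬ closedNbhd H v ⊆ S := by
  contrapose! hS
  exact Finset.eq_univ_iff_forall.2 fun v => hS v (mem_closedNbhd_self H v)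

theorem domGameVal_univ (H : Finset (Finset V)) (b : Bool) :
    domGameVal H b Finset.univ = 0 := by
  rw [domGameVal, dif_neg (by simp)]

section Recursion

variable [DecidableEq V]

theorem exists_domGameVal_eq (H : Finset (Finset V)) (b : Bool) {S : Finset V}
    (hS : S ≠ Finset.univ) :
    ∃ v, ¬ closedNbhd H v ⊆ S ∧ domGameVal H b S = 1 + domGameVal H (!b) (S ∪ closedNbhd H v) := by
  -- `domGameVal` forms its unions with the classical instance.
  obtain rfl : ‹DecidableEq V› = fun _ _ => Classical.propDecidable _ := Subsingleton.elim _ _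
  obtain ⟨w, hw⟩ := exists_not_closedNbhd_subset H hS
  have hne : (Finset.univ.filter fun v => ¬ closedNbhd H v ⊆ S).Nonempty := ⟨w, by simpa using hw⟩
  rw [domGameVal, dif_pos hne]
  cases b
  · obtain ⟨v, -, hv⟩ := Finset.exists_mem_eq_sup' (Finset.attach_nonempty_iff.2 hne)
      fun v => domGameVal H true (S ∪ closedNbhd H v.1)
    exact ⟨v, (Finset.mem_filter.1 v.2).2, congrArg (1 + ·) hv⟩
  · obtain ⟨v, -, hv⟩ := Finset.exists_mem_eq_inf' (Finset.attach_nonempty_iff.2 hne)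
      fun v => domGameVal H false (S ∪ closedNbhd H v.1)
    exact ⟨v, (Finset.mem_filter.1 v.2).2, congrArg (1 + ·) hv⟩

theorem domGameVal_true_le {S : Finset V} {v : V} (hv : ¬ closedNbhd H v ⊆ S) :
    domGameVal H true S ≤ 1 + domGameVal H false (S ∪ closedNbhd H v) := by
  obtain rfl : ‹DecidableEq V› = fun _ _ => Classical.propDecidable _ := Subsingleton.elim _ _
  have hmem : v ∈ Finset.univ.filter fun v => ¬ closedNbhd H v ⊆ S := by simpa using hv
  rw [domGameVal, dif_pos ⟨v, hmem⟩]
  exact Nat.add_le_add_left (Finset.inf'_le _ (Finset.mem_attach _ ⟨v, hmem⟩)) 1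

theorem le_domGameVal_false {S : Finset V} {v : V} (hv : ¬ closedNbhd H v ⊆ S) :
    1 + domGameVal H true (S ∪ closedNbhd H v) ≤ domGameVal H false S := by
  obtain rfl : ‹DecidableEq V› = fun _ _ => Classical.propDecidable _ := Subsingleton.elim _ _
  have hmem : v ∈ Finset.univ.filter fun v => ¬ closedNbhd H v ⊆ S := by simpa using hv
  rw [domGameVal.eq_def H false, dif_pos ⟨v, hmem⟩]
  exact Nat.add_le_add_left (Finset.le_sup' (fun v : {x // x ∈ _} =>
    domGameVal H true (S ∪ closedNbhd H v.1)) (Finset.mem_attach _ ⟨v, hmem⟩)) 1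

theorem domGameVal_le_card_compl (H : Finset (Finset V)) (b : Bool) (S : Finset V) :
    domGameVal H b S ≤ Sᶜ.card := by
  induction S using WellFoundedGT.induction generalizing b with | ind S ih
  by_cases hS : S = Finset.univ
  · simp [hS, domGameVal_univ]
  obtain ⟨v, hv, hval⟩ := exists_domGameVal_eq H b hS
  have hgrow : S < S ∪ closedNbhd H v := left_lt_sup.2 hv
  have hcard : (S ∪ closedNbhd H v)ᶜ.card < Sᶜ.card :=
    Finset.card_lt_card (compl_lt_compl_iff_lt.2 hgrow)
  have hrec := ih _ hgrow (!b)
  omega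

/-- A 2-packing: a set of vertices with pairwise disjoint closed neighborhoods. Its size bounds
the length of any play from below. -/
def IsTwoPacking (H : Finset (Finset V)) (P : Finset V) : Prop :=
  (P : Set V).PairwiseDisjoint (closedNbhd H)

theorem IsTwoPacking.card_inter_closedNbhd_le_one {P : Finset V} (hP : IsTwoPacking H P) (v : V) :
    (P ∩ closedNbhd H v).card ≤ 1 := by
  refine Finset.card_le_one.2 fun u hu w hw => ?_
  rw [Finset.mem_inter, mem_closedNbhd_comm] at hu hw
  exact hP.elim_finset hu.1 hw.1 v hu.2 hw.2

theorem IsTwoPacking.card_sdiff_le_domGameVal {P : Finset V} (hP : IsTwoPacking H P) (b : Bool)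
    (S : Finset V) : (P \ S).card ≤ domGameVal H b S := by
  induction S using WellFoundedGT.induction generalizing b with | ind S ih
  by_cases hS : S = Finset.univ
  · simp [Finset.sdiff_eq_empty_iff_subset.2 (hS ▸ Finset.subset_univ P)]
  obtain ⟨v, hv, hval⟩ := exists_domGameVal_eq H b hS
  have hrec := ih _ (left_lt_sup.2 hv) (!b)
  calc (P \ S).card
      ≤ (P ∩ closedNbhd H v ∪ P \ (S ∪ closedNbhd H v)).card := Finset.card_le_card fun u => by
        simp only [Finset.mem_union, Finset.mem_inter, Finset.mem_sdiff]
        tauto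
    _ ≤ (P ∩ closedNbhd H v).card + (P \ (S ∪ closedNbhd H v)).card := Finset.card_union_le _ _
    _ ≤ 1 + domGameVal H (!b) (S ∪ closedNbhd H v) :=
        Nat.add_le_add (hP.card_inter_closedNbhd_le_one v) hrec
    _ = domGameVal H b S := hval.symm

end Recursion

end DominationGame

section Grid

/-- The vertex in row `r` and column `c` when `1, …, 9` fill a `3 × 3` array row by row. The edges
of `gridHypergraph` are then the three columns and the rows `0` and `1`. -/
def cell (r c : Fin 3) : Fin 9 := finProdFinEquiv (r, c)

theorem exists_eq_cell : ∀ v : Fin 9, ∃ r c, v = cell r c := by decide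

theorem cell_mem_closedNbhd_cell {r c r' c' : Fin 3} :
    cell r' c' ∈ closedNbhd gridHypergraph (cell r c) ↔ c' = c ∨ r' = r ∧ r ≠ 2 := by
  rw [mem_closedNbhd, gridHypergraph]
  revert r c r' c'
  decide +kernel

variable {b : Bool} {S : Finset (Fin 9)}

theorem domGameVal_gridHypergraph_le_card_mul_card {A B : Finset (Fin 3)}
    (h : ∀ r c, cell r c ∉ S → r ∈ A ∧ c ∈ B) :
    domGameVal gridHypergraph b S ≤ A.card * B.card := by
  have hsub : Sᶜ ⊆ Finset.image₂ cell A B := fun v hv => by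
    obtain ⟨r, c, rfl⟩ := exists_eq_cell v
    obtain ⟨hr, hc⟩ := h r c (Finset.mem_compl.1 hv)
    exact Finset.mem_image₂_of_mem hr hc
  calc domGameVal gridHypergraph b S
      ≤ Sᶜ.card := domGameVal_le_card_compl _ b S
    _ ≤ (Finset.image₂ cell A B).card := Finset.card_le_card hsub
    _ ≤ A.card * B.card := Finset.card_image₂_le cell A B

theorem isTwoPacking_image_cell_two (C : Finset (Fin 3)) :
    IsTwoPacking gridHypergraph (C.image (cell 2)) := by
  simp only [IsTwoPacking, Set.PairwiseDisjoint, Set.Pairwise, Finset.coe_image,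
    Set.forall_mem_image]
  intro c _ c' _ hne
  refine Finset.disjoint_left.2 fun v hv hv' => hne ?_
  obtain ⟨r, d, rfl⟩ := exists_eq_cell v
  simp only [cell_mem_closedNbhd_cell, ne_eq, not_true_eq_false, and_false, or_false] at hv hv'
  rw [← hv, hv']

theorem card_le_domGameVal_gridHypergraph {C : Finset (Fin 3)} (h : ∀ c ∈ C, cell 2 c ∉ S) :
    C.card ≤ domGameVal gridHypergraph b S := by
  have hinj : Function.Injective (cell 2) := by decide
  have hdisj : Disjoint (C.image (cell 2)) S := by
    simpa [Finset.disjoint_left] using h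
  simpa [Finset.sdiff_eq_self_of_disjoint hdisj, Finset.card_image_of_injective C hinj] using
    (isTwoPacking_image_cell_two C).card_sdiff_le_domGameVal b S

/-- A row forming an edge, and different from `r`. -/
def otherEdgeRow (r : Fin 3) : Fin 3 := if r = 0 then 1 else 0

theorem otherEdgeRow_ne_self (r : Fin 3) : otherEdgeRow r ≠ r := by revert r; decide

theorem otherEdgeRow_ne_two (r : Fin 3) : otherEdgeRow r ≠ 2 := by revert r; decide

theorem not_closedNbhd_subset_of_cell_notMem {r c c' : Fin 3} (hr : r ≠ 2)
    (h : cell r c' ∉ S) : ¬ closedNbhd gridHypergraph (cell r c) ⊆ S :=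
  fun hsub => h (hsub (cell_mem_closedNbhd_cell.2 (.inr ⟨rfl, hr⟩)))

theorem not_closedNbhd_otherEdgeRow_subset (r c c' : Fin 3) :
    ¬ closedNbhd gridHypergraph (cell (otherEdgeRow r) c') ⊆
      closedNbhd gridHypergraph (cell r c) :=
  not_closedNbhd_subset_of_cell_notMem (c' := c + 1) (otherEdgeRow_ne_two r)
    (by simp [cell_mem_closedNbhd_cell, otherEdgeRow_ne_self])

theorem closedNbhd_cell_ne_univ (r c : Fin 3) :
    closedNbhd gridHypergraph (cell r c) ≠ Finset.univ :=
  fun h => not_closedNbhd_otherEdgeRow_subset r c c (h ▸ Finset.subset_univ _)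

theorem card_compl_singleton_fin_three (c : Fin 3) : ({c}ᶜ : Finset (Fin 3)).card = 2 := by
  simp [Finset.card_compl]

theorem card_compl_pair_fin_three {c d : Fin 3} (h : c ≠ d) :
    ({c, d}ᶜ : Finset (Fin 3)).card = 1 := by
  rw [Finset.card_compl, Finset.card_pair h, Fintype.card_fin]

theorem domGameVal_le_two_of_legal_reply_to_corner {r c : Fin 3}
    (h : ¬ closedNbhd gridHypergraph (cell r c) ⊆ closedNbhd gridHypergraph (cell 0 0)) :
    domGameVal gridHypergraph b
      (closedNbhd gridHypergraph (cell 0 0) ∪ closedNbhd gridHypergraph (cell r c)) ≤ 2 := by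
  have hnew : c ≠ 0 ∨ r = 1 := by
    contrapose! h
    intro u hu
    obtain ⟨i, j, rfl⟩ := exists_eq_cell u
    rw [cell_mem_closedNbhd_cell] at hu ⊢
    omega
  obtain hc | rfl := hnew
  · calc domGameVal gridHypergraph b _
        ≤ ({0}ᶜ : Finset (Fin 3)).card * ({0, c}ᶜ : Finset (Fin 3)).card := by
          refine domGameVal_gridHypergraph_le_card_mul_card fun i j hij => ?_
          simp only [Finset.mem_union, cell_mem_closedNbhd_cell, Finset.mem_compl,
            Finset.mem_insert, Finset.mem_singleton] at hij ⊢
          omega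
      _ = 2 := by rw [card_compl_singleton_fin_three, card_compl_pair_fin_three hc.symm]
  · calc domGameVal gridHypergraph b _
        ≤ ({0, 1}ᶜ : Finset (Fin 3)).card * ({0}ᶜ : Finset (Fin 3)).card := by
          refine domGameVal_gridHypergraph_le_card_mul_card fun i j hij => ?_
          simp only [Finset.mem_union, cell_mem_closedNbhd_cell, Finset.mem_compl,
            Finset.mem_insert, Finset.mem_singleton] at hij ⊢
          omega
      _ = 2 := by rw [card_compl_singleton_fin_three, card_compl_pair_fin_three zero_ne_one]

theorem gammaGame_gridHypergraph_le : gammaGame gridHypergraph ≤ 4 := by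
  have hopen := domGameVal_true_le (not_closedNbhd_subset_empty gridHypergraph (cell 0 0))
  rw [Finset.empty_union] at hopen
  obtain ⟨v, hlegal, hreply⟩ :=
    exists_domGameVal_eq gridHypergraph false (closedNbhd_cell_ne_univ 0 0)
  obtain ⟨r, c, rfl⟩ := exists_eq_cell v
  have hrest := domGameVal_le_two_of_legal_reply_to_corner (b := true) hlegal
  rw [Bool.not_false] at hreply
  rw [gammaGame]
  omega

theorem le_gammaGame_gridHypergraph : 4 ≤ gammaGame gridHypergraph := by
  obtain ⟨v, -, hopen⟩ :=
    exists_domGameVal_eq gridHypergraph true Finset.univ_nonempty.ne_empty.symm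
  obtain ⟨r, c, rfl⟩ := exists_eq_cell v
  rw [Bool.not_true, Finset.empty_union] at hopen
  have hreply := le_domGameVal_false (not_closedNbhd_otherEdgeRow_subset r c c)
  have hrest : 2 ≤ domGameVal gridHypergraph true (closedNbhd gridHypergraph (cell r c) ∪
      closedNbhd gridHypergraph (cell (otherEdgeRow r) c)) := by
    rw [← card_compl_singleton_fin_three c]
    refine card_le_domGameVal_gridHypergraph fun d hd => ?_
    simpa [cell_mem_closedNbhd_cell, otherEdgeRow_ne_two, eq_comm] using hd
  rw [gammaGame]
  omega

theorem gammaGame'_gridHypergraph_le : gammaGame' gridHypergraph ≤ 4 := by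
  obtain ⟨v, -, hopen⟩ :=
    exists_domGameVal_eq gridHypergraph false Finset.univ_nonempty.ne_empty.symm
  obtain ⟨r, c, rfl⟩ := exists_eq_cell v
  rw [Bool.not_false, Finset.empty_union] at hopen
  have hreply := domGameVal_true_le (not_closedNbhd_otherEdgeRow_subset r c (c + 1))
  have hrest : domGameVal gridHypergraph false (closedNbhd gridHypergraph (cell r c) ∪
      closedNbhd gridHypergraph (cell (otherEdgeRow r) (c + 1))) ≤ 2 := by
    calc domGameVal gridHypergraph false _
        ≤ ({otherEdgeRow r}ᶜ : Finset (Fin 3)).card * ({c, c + 1}ᶜ : Finset (Fin 3)).card := by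
          refine domGameVal_gridHypergraph_le_card_mul_card fun i j hij => ?_
          have hedge := otherEdgeRow_ne_two r
          simp only [Finset.mem_union, cell_mem_closedNbhd_cell, Finset.mem_compl,
            Finset.mem_insert, Finset.mem_singleton] at hij ⊢
          tauto
      _ = 2 := by rw [card_compl_singleton_fin_three, card_compl_pair_fin_three (by simp)]
  rw [gammaGame']
  omega

theorem le_gammaGame'_gridHypergraph : 4 ≤ gammaGame' gridHypergraph := by
  have hopen := le_domGameVal_false (not_closedNbhd_subset_empty gridHypergraph (cell 2 0))
  rw [Finset.empty_union] at hopen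
  obtain ⟨v, -, hreply⟩ := exists_domGameVal_eq gridHypergraph true (closedNbhd_cell_ne_univ 2 0)
  obtain ⟨r, c, rfl⟩ := exists_eq_cell v
  rw [Bool.not_true] at hreply
  obtain ⟨d, hd0, hdc⟩ := Fin.exists_ne_and_ne_of_two_lt 0 c (by decide)
  have hthird := le_domGameVal_false (not_closedNbhd_subset_of_cell_notMem (c := 0) (c' := d)
    (S := closedNbhd gridHypergraph (cell 2 0) ∪ closedNbhd gridHypergraph (cell r c))
    (otherEdgeRow_ne_two r) (by simp [cell_mem_closedNbhd_cell, otherEdgeRow_ne_self, hd0, hdc]))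
  have hrest : 1 ≤ domGameVal gridHypergraph true (closedNbhd gridHypergraph (cell 2 0) ∪
      closedNbhd gridHypergraph (cell r c) ∪
        closedNbhd gridHypergraph (cell (otherEdgeRow r) 0)) := by
    rw [← Finset.card_singleton d]
    refine card_le_domGameVal_gridHypergraph fun e he => ?_
    rw [Finset.mem_singleton.1 he]
    simp [cell_mem_closedNbhd_cell, otherEdgeRow_ne_two, eq_comm, hd0, hdc.symm]
  rw [gammaGame']
  omega

end Grid

/-- the hypergraph above satisfies
`γ_g(H) = γ_g'(H) = 4 = (4/9) |V(H)|`. -/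
theorem stmt_11 :
    gammaGame gridHypergraph = 4 ∧ gammaGame' gridHypergraph = 4 ∧
    (4 : ℝ) = 4 / 9 * Fintype.card (Fin 9) := by
  refine ⟨gammaGame_gridHypergraph_le.antisymm le_gammaGame_gridHypergraph,
    gammaGame'_gridHypergraph_le.antisymm le_gammaGame'_gridHypergraph, ?_⟩
  norm_num
end
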